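/- arXiv:math/0012063 — 10 statements merged into one kernel-verified Lean document; each statement's English description precedes it below -/
import Mathlib

section
/- For every nonzero ℓ ∈ F and every a ∈ ℕ, the polynomial p = C(ℓ)·det[X]^a ∈ R satisfies D(p) = q·p, where q = C(d(ℓ)/ℓ) + a·Σ_{i=1}^n Y_{ii}. In particular, D(det[X]) = (Σ_{i=1}^n Y_{ii})·det[X], and every ℓ·det[X]^a is a Darboux polynomial in R. -/
open MvPolynomial

/-- The polynomial ring `R = F{Y_ij}[X_ij]`: multivariate polynomials over `F` in the
variables `Y i j k` (indexed by `Sum.inl (i,j,k)`) and `X i j` (indexed by `Sum.inr (i,j)`). -/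
abbrev Rgen (F : Type*) [Field F] (n : ℕ) : Type _ :=
  MvPolynomial ((Fin n × Fin n × ℕ) ⊕ (Fin n × Fin n)) F

/-- `det[X]`: the determinant of the `n × n` matrix whose `(i,j)` entry is the variable `X i j`. -/
noncomputable def detX (F : Type*) [Field F] (n : ℕ) : Rgen F n :=
  (Matrix.of fun i j : Fin n => X (Sum.inr (i, j))).det

/-- The `F`-subalgebra `F{Y}` of `R` generated by all the variables `Y i j k`. -/
noncomputable def FY (F : Type*) [Field F] (n : ℕ) : Subalgebra F (Rgen F n) :=
  Algebra.adjoin F (Set.range fun v : Fin n × Fin n × ℕ => X (Sum.inl v))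

/-- The `F`-subalgebra `F[X]` of `R` generated by all the variables `X i j`. -/
noncomputable def FX (F : Type*) [Field F] (n : ℕ) : Subalgebra F (Rgen F n) :=
  Algebra.adjoin F (Set.range fun v : Fin n × Fin n => X (Sum.inr v))

/-- The Leibniz rule for a derivation applied to a finite product. -/
theorem Derivation.map_prod_eq_sum_erase {k A ι : Type*} [CommRing k] [CommRing A] [Algebra k A]
    [DecidableEq ι] (D : Derivation k A A) (s : Finset ι) (f : ι → A) :
    D (∏ i ∈ s, f i) = ∑ i ∈ s, D (f i) * ∏ j ∈ s.erase i, f j := by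
  induction s using Finset.induction_on with
  | empty => simp
  | insert a s ha ih =>
    rw [Finset.prod_insert ha, D.leibniz, ih, Finset.sum_insert ha, Finset.erase_insert ha,
      smul_eq_mul, smul_eq_mul, Finset.mul_sum, add_comm, mul_comm (D (f a))]
    congr 1
    refine Finset.sum_congr rfl fun i hi => ?_
    have hia : a ≠ i := fun h => ha (h ▸ hi)
    rw [Finset.erase_insert_of_ne hia, Finset.prod_insert (fun h => ha (Finset.mem_of_mem_erase h))]
    ring

/-- A derivation differentiates a determinant one row at a time. -/
theorem Derivation.map_det_eq_sum_updateRow {k A ι : Type*} [CommRing k] [CommRing A] [Algebra k A]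
    [Fintype ι] [DecidableEq ι] (D : Derivation k A A) (M : Matrix ι ι A) :
    D M.det = ∑ i, (M.updateRow i fun j => D (M i j)).det := by
  have hdet (N : Matrix ι ι A) :
      N.det = ∑ σ : Equiv.Perm ι, Equiv.Perm.sign σ • ∏ i, N i (σ i) := by
    rw [← Matrix.det_transpose, Matrix.det_apply]
    rfl
  simp_rw [hdet]
  rw [map_sum, Finset.sum_comm]
  refine Finset.sum_congr rfl fun σ _ => ?_
  rw [Units.smul_def, map_zsmul, D.map_prod_eq_sum_erase, Finset.smul_sum]
  refine Finset.sum_congr rfl fun i _ => ?_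
  rw [Units.smul_def, ← Finset.mul_prod_erase _ _ (Finset.mem_univ i), Matrix.updateRow_self]
  congr 2
  refine Finset.prod_congr rfl fun j hj => ?_
  rw [Matrix.updateRow_ne (Finset.ne_of_mem_erase hj)]

/-- Jacobi's formula: if `D M = B * M` entrywise, then `D (det M) = tr B * det M`. -/
theorem Derivation.map_det_of_map_eq_mul {k A ι : Type*} [CommRing k] [CommRing A] [Algebra k A]
    [Fintype ι] [DecidableEq ι] (D : Derivation k A A) (M B : Matrix ι ι A)
    (h : ∀ i j, D (M i j) = (B * M) i j) : D M.det = B.trace * M.det := by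
  rw [D.map_det_eq_sum_updateRow, Matrix.trace, Finset.sum_mul]
  refine Finset.sum_congr rfl fun i _ => ?_
  have hrow : (fun j => D (M i j)) = ∑ l, B i l • M l := by
    ext j
    simp [h, Matrix.mul_apply]
  rw [hrow, Matrix.det_updateRow_sum, smul_eq_mul, Matrix.diag_apply]

/-- For nonzero `ℓ ∈ F` and `a ∈ ℕ`, `p = C ℓ * det[X]^a` is a Darboux
polynomial with cofactor `q = C (d ℓ / ℓ) + a • ∑ i, Y i i`; in particular
`D det[X] = (∑ i, Y i i) * det[X]`. -/
theorem stmt_1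
    {F : Type*} [Field F] [CharZero F] (d : F → F)
    (hd_add : ∀ a b : F, d (a + b) = d a + d b)
    (hd_mul : ∀ a b : F, d (a * b) = d a * b + a * d b)
    (n : ℕ) (hn : 1 ≤ n)
    (D : Rgen F n → Rgen F n)
    (hD_add : ∀ a b, D (a + b) = D a + D b)
    (hD_mul : ∀ a b, D (a * b) = D a * b + a * D b)
    (hD_C : ∀ f : F, D (C f) = C (d f))
    (hD_Y : ∀ (i j : Fin n) (k : ℕ),
      D (X (Sum.inl (i, j, k))) = X (Sum.inl (i, j, k + 1)))
    (hD_X : ∀ i j : Fin n,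
      D (X (Sum.inr (i, j))) = ∑ l : Fin n, X (Sum.inl (i, l, 0)) * X (Sum.inr (l, j)))
    (l : F) (hl : l ≠ 0) (a : ℕ) :
    D (C l * detX F n ^ a) =
      (C (d l / l) + a • ∑ i : Fin n, X (Sum.inl (i, i, (0 : ℕ)))) * (C l * detX F n ^ a) ∧
    D (detX F n) = (∑ i : Fin n, X (Sum.inl (i, i, (0 : ℕ)))) * detX F n := by
  let D' : Derivation ℤ (Rgen F n) (Rgen F n) :=
    Derivation.mk' (AddMonoidHom.mk' D hD_add).toIntLinearMap fun a b => by
      simp [hD_mul, mul_comm, add_comm]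
  have hdet : D (detX F n) = (∑ i : Fin n, X (Sum.inl (i, i, (0 : ℕ)))) * detX F n :=
    D'.map_det_of_map_eq_mul (Matrix.of fun i j : Fin n => X (Sum.inr (i, j)))
      (Matrix.of fun i j : Fin n => X (Sum.inl (i, j, 0))) hD_X
  have hpow : D (detX F n ^ a) =
      (a • ∑ i : Fin n, X (Sum.inl (i, i, (0 : ℕ)))) * detX F n ^ a := by
    have hleibniz : D (detX F n ^ a) = a • detX F n ^ (a - 1) • D (detX F n) :=
      D'.leibniz_pow (detX F n) a
    rw [hleibniz, hdet]
    cases a with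
    | zero => simp
    | succ m =>
      simp only [nsmul_eq_mul, smul_eq_mul, Nat.add_sub_cancel]
      ring
  refine ⟨?_, hdet⟩
  have hC : (C (d l) : Rgen F n) = C (d l / l) * C l := by
    rw [← C_mul, div_mul_cancel₀ _ hl]
  rw [hD_mul, hD_C, hpow, hC]
  ring
end

section
/- Assume that every nonzero Darboux polynomial in R has the asserted form: for all p, q ∈ R with p ≠ 0 and D(p) = q·p there exist a nonzero ℓ ∈ F and a ∈ ℕ with p = C(ℓ)·det[X]^a. Then the extension K ⊇ F has no new constants: for every u ∈ K with D_K(u) = 0 there exists c ∈ F with d(c) = 0 and u = algebraMap F K c (composing F → R → K). -/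
open MvPolynomial

/-- The determinant of a nonempty generic matrix has no constant term. -/
theorem constantCoeff_detX (F : Type*) [Field F] {n : ℕ} (hn : 1 ≤ n) :
    constantCoeff (detX F n) = 0 := by
  have : Nonempty (Fin n) := ⟨⟨0, hn⟩⟩
  rw [detX, RingHom.map_det]
  rw [← Matrix.det_zero (n := Fin n) (R := F)]
  congr 1
  ext i j
  simp

/-- If all Darboux polynomials are scalar multiples of powers of `det[X]`, then every
polynomial constant lies in `F`. -/
theorem exists_eq_C_of_derivation_eq_zero {F : Type*} [Field F] {n : ℕ} (hn : 1 ≤ n)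
    {D : Rgen F n → Rgen F n} (hD_add : ∀ a b, D (a + b) = D a + D b) (hD_one : D 1 = 0)
    (hdarboux : ∀ p q : Rgen F n, p ≠ 0 → D p = q * p →
      ∃ (l : F) (a : ℕ), l ≠ 0 ∧ p = C l * detX F n ^ a)
    {w : Rgen F n} (hw : D w = 0) : ∃ c : F, w = C c := by
  rcases eq_or_ne w 0 with rfl | hw0
  · exact ⟨0, by simp⟩
  rcases eq_or_ne (w + 1) 0 with hw1 | hw1
  · exact ⟨-1, by simpa using eq_neg_of_add_eq_zero_left hw1⟩
  obtain ⟨l, a, -, hwa⟩ := hdarboux w 0 hw0 (by simp [hw])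
  obtain ⟨m, b, -, hwb⟩ := hdarboux (w + 1) 0 hw1 (by simp [hD_add, hw, hD_one])
  rcases eq_or_ne a 0 with rfl | ha
  · exact ⟨l, by simpa using hwa⟩
  rcases eq_or_ne b 0 with rfl | hb
  · exact ⟨m - 1, by simpa using eq_sub_of_add_eq hwb⟩
  · have h := congrArg constantCoeff hwb
    rw [hwa] at h
    simp [constantCoeff_detX F hn, ha, hb] at h

/-- Two scalar multiples of powers of the same element are comparable under divisibility. -/
theorem dvd_or_dvd_of_eq_C_mul_pow {σ F : Type*} [Field F] {x p q : MvPolynomial σ F}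
    {l m : F} {a b : ℕ} (hl : l ≠ 0) (hm : m ≠ 0) (hp : p = C l * x ^ a)
    (hq : q = C m * x ^ b) : p ∣ q ∨ q ∣ p := by
  have hl' : IsUnit (C l : MvPolynomial σ F) := hl.isUnit.map C
  have hm' : IsUnit (C m : MvPolynomial σ F) := hm.isUnit.map C
  subst hp hq
  refine (le_total a b).imp (fun h => ?_) fun h => ?_
  · exact hl'.mul_left_dvd.2 ((pow_dvd_pow x h).mul_left _)
  · exact hm'.mul_left_dvd.2 ((pow_dvd_pow x h).mul_left _)

/-- If every nonzero Darboux polynomial in `R` is of the form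
`C ℓ * det[X]^a`, then the fraction field `K` of `R` has no new constants over `F`. -/
theorem stmt_2
    {F : Type*} [Field F] [CharZero F] (d : F → F)
    (hd_add : ∀ a b : F, d (a + b) = d a + d b)
    (hd_mul : ∀ a b : F, d (a * b) = d a * b + a * d b)
    (n : ℕ) (hn : 1 ≤ n)
    (D : Rgen F n → Rgen F n)
    (hD_add : ∀ a b, D (a + b) = D a + D b)
    (hD_mul : ∀ a b, D (a * b) = D a * b + a * D b)
    (hD_C : ∀ f : F, D (C f) = C (d f))
    (hD_Y : ∀ (i j : Fin n) (k : ℕ),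
      D (X (Sum.inl (i, j, k))) = X (Sum.inl (i, j, k + 1)))
    (hD_X : ∀ i j : Fin n,
      D (X (Sum.inr (i, j))) = ∑ l : Fin n, X (Sum.inl (i, l, 0)) * X (Sum.inr (l, j)))
    (DK : FractionRing (Rgen F n) → FractionRing (Rgen F n))
    (hDK_add : ∀ a b, DK (a + b) = DK a + DK b)
    (hDK_mul : ∀ a b, DK (a * b) = DK a * b + a * DK b)
    (hDK_comp : ∀ r : Rgen F n,
      DK (algebraMap (Rgen F n) (FractionRing (Rgen F n)) r) =
        algebraMap (Rgen F n) (FractionRing (Rgen F n)) (D r))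
    (hdarboux : ∀ p q : Rgen F n, p ≠ 0 → D p = q * p →
      ∃ (l : F) (a : ℕ), l ≠ 0 ∧ p = C l * detX F n ^ a) :
    ∀ u : FractionRing (Rgen F n), DK u = 0 →
      ∃ c : F, d c = 0 ∧
        u = algebraMap (Rgen F n) (FractionRing (Rgen F n)) (C c) := by
  intro u hu
  set φ := algebraMap (Rgen F n) (FractionRing (Rgen F n)) with hφ
  have hinj : Function.Injective φ := IsFractionRing.injective _ _
  have hD_one : D 1 = 0 := by simpa using hD_mul 1 1
  have hDK_one : DK 1 = 0 := by simpa using hDK_mul 1 1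
  have hD_of : ∀ w, DK (φ w) = 0 → D w = 0 := fun w hw =>
    hinj (by rw [← hDK_comp, hw, map_zero])
  have hpoly : ∀ w, DK (φ w) = 0 → ∃ c, w = C c := fun w hw =>
    exists_eq_C_of_derivation_eq_zero hn hD_add hD_one hdarboux (hD_of w hw)
  suffices h : ∃ c, u = φ (C c) by
    obtain ⟨c, rfl⟩ := h
    refine ⟨c, C_injective ((Fin n × Fin n × ℕ) ⊕ (Fin n × Fin n)) F ?_, rfl⟩
    rw [← hD_C, hD_of _ hu, C_0]
  rcases eq_or_ne u 0 with rfl | hu0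
  · exact ⟨0, by simp⟩
  obtain ⟨p, q, hpq, hmk⟩ := IsFractionRing.exists_reduced_fraction (A := Rgen F n) u
  have hq0 : (q : Rgen F n) ≠ 0 := nonZeroDivisors.coe_ne_zero q
  have hup : u * φ q = φ p := by rw [← hmk, IsLocalization.mk'_spec]
  have hp0 : p ≠ 0 := by
    rintro rfl
    simp [hu0, hq0, hφ] at hup
  have hcross : D p * q = p * D q := by
    apply hinj
    have h := congrArg DK hup
    rw [hDK_mul, hu, zero_mul, zero_add, hDK_comp, hDK_comp] at h
    rw [map_mul, map_mul, ← h, ← hup]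
    ring
  obtain ⟨r, hr⟩ : p ∣ D p := hpq.dvd_of_dvd_mul_right ⟨_, hcross⟩
  obtain ⟨s, hs⟩ : (q : Rgen F n) ∣ D q :=
    hpq.symm.dvd_of_dvd_mul_left ⟨D p, by rw [← hcross, mul_comm]⟩
  obtain ⟨l, a, hl, hpa⟩ := hdarboux p r hp0 (by rw [hr, mul_comm])
  obtain ⟨m, b, hm, hqb⟩ := hdarboux q s hq0 (by rw [hs, mul_comm])
  rcases dvd_or_dvd_of_eq_C_mul_pow hl hm hpa hqb with ⟨w, hw⟩ | ⟨w, hw⟩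
  · have huw : u * φ w = 1 := by
      have hφp : φ p ≠ 0 := (map_ne_zero_iff φ hinj).2 hp0
      apply mul_left_cancel₀ hφp
      rw [hw, map_mul] at hup
      rw [mul_one, mul_left_comm, hup]
    have hDw : DK (φ w) = 0 := by
      have h := congrArg DK huw
      rw [hDK_mul, hu, zero_mul, zero_add, hDK_one] at h
      exact (mul_eq_zero.1 h).resolve_left hu0
    obtain ⟨c, rfl⟩ := hpoly w hDw
    have hc : c ≠ 0 := by
      rintro rfl
      simp at huw
    refine ⟨c⁻¹, mul_right_cancel₀ (right_ne_zero_of_mul_eq_one huw) ?_⟩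
    rw [huw, ← map_mul, ← C_mul, inv_mul_cancel₀ hc, C_1, map_one]
  · have huw : u = φ w := by
      have hφq : φ q ≠ 0 := (map_ne_zero_iff φ hinj).2 hq0
      apply mul_right_cancel₀ hφq
      rw [hup, hw, map_mul, mul_comm]
    obtain ⟨c, rfl⟩ := hpoly w (huw ▸ hu)
    exact ⟨c, huw⟩
end

section
/- If h, g ∈ A satisfy D(h) = g·h, then h lies in F, i.e. h is a constant polynomial: h ∈ Set.range (C : F → A). In other words, there are no non-trivial Darboux polynomials in the differential polynomial ring F{Y_{ij}}. -/
open MvPolynomial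

/-- The ring of differential polynomials `A = F{Y_ij}`: multivariate polynomials over `F`
in the variables `Y i j k` (with `Y i j := Y i j 0`). -/
abbrev Agen (F : Type*) [Field F] (n : ℕ) : Type _ :=
  MvPolynomial (Fin n × Fin n × ℕ) F

/-- In characteristic zero, a polynomial whose partial derivative in `v` is a multiple of itself
does not involve `v`. -/
theorem MvPolynomial.notMem_vars_of_pderiv_eq_mul {σ R : Type*} [CommRing R] [IsDomain R]
    [CharZero R] {v : σ} {p q : MvPolynomial σ R} (h : pderiv v p = q * p) : v ∉ p.vars := by
  intro hv
  obtain ⟨m, hm, hvm⟩ := (mem_vars_iff_mem_support v).mp hv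
  have hvm' : m v ≠ 0 := Finsupp.mem_support_iff.mp hvm
  have hne : pderiv v p ≠ 0 := by
    intro h0
    have hc := coeff_pderiv (i := v) p (m - Finsupp.single v 1)
    rw [h0, coeff_zero, Finsupp.sub_add_single_one_cancel hvm', eq_comm, mul_eq_zero] at hc
    exact hc.elim (mem_support_iff.mp hm) (Nat.cast_add_one_ne_zero _)
  have hlt : (pderiv v p).totalDegree < p.totalDegree := by
    obtain ⟨e, he, hdeg⟩ := Finset.exists_mem_eq_sup (pderiv v p).support
      (support_nonempty.mpr hne) fun s => s.sum fun _ k => k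
    have he' : e + Finsupp.single v 1 ∈ p.support := by
      rw [mem_support_iff, coeff_pderiv] at he
      exact mem_support_iff.mpr (left_ne_zero_of_mul he)
    have hle := le_totalDegree he'
    rw [Finsupp.sum_add_index' (fun _ => rfl) (fun _ _ _ => rfl),
      Finsupp.sum_single_index rfl] at hle
    rw [totalDegree, hdeg]
    exact hle
  rw [h] at hne hlt
  rw [totalDegree_mul_of_isDomain (left_ne_zero_of_mul hne) (right_ne_zero_of_mul hne)] at hlt
  omega

/-- The partial derivative in `Y i j (k + 1)` and the derivation `D` commute up to the partial
derivative in `Y i j k`. -/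
theorem Agen.pderiv_succ_derivation {F : Type*} [Field F] {d : F → F} {n : ℕ}
    {D : Agen F n → Agen F n}
    (hD_add : ∀ a b, D (a + b) = D a + D b)
    (hD_mul : ∀ a b, D (a * b) = D a * b + a * D b)
    (hD_C : ∀ f : F, D (C f) = C (d f))
    (hD_Y : ∀ (i j : Fin n) (k : ℕ), D (X (i, j, k)) = X (i, j, k + 1))
    (i j : Fin n) (k : ℕ) (p : Agen F n) :
    pderiv (i, j, k + 1) (D p) = D (pderiv (i, j, k + 1) p) + pderiv (i, j, k) p := by
  have hD_zero : D 0 = 0 := by simpa using hD_add 0 0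
  have hD_one : D 1 = 0 := by simpa using hD_mul 1 1
  induction p using MvPolynomial.induction_on with
  | C a => simp [hD_C, hD_zero]
  | add p q hp hq =>
    simp only [hD_add, map_add, hp, hq]
    ring
  | mul_X p u hp =>
    obtain ⟨a, b, c⟩ := u
    have hX : pderiv (i, j, k + 1) (X (a, b, c + 1) : Agen F n) =
        pderiv (i, j, k) (X (a, b, c)) := by
      classical simp [pderiv_X, Pi.single_apply]
    have hconst : D (pderiv (i, j, k + 1) (X (a, b, c))) = 0 := by
      classical
      rw [pderiv_X, Pi.single_apply]
      split_ifs
      exacts [hD_one, hD_zero]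
    simp only [hD_mul, hD_add, hD_Y, pderiv_mul, map_add, hp, hX, hconst]
    ring

/-- There are no non-trivial Darboux polynomials in `F{Y_ij}`:
if `D h = g * h` then `h` is a constant polynomial. -/
theorem stmt_3
    {F : Type*} [Field F] [CharZero F] (d : F → F)
    (hd_add : ∀ a b : F, d (a + b) = d a + d b)
    (hd_mul : ∀ a b : F, d (a * b) = d a * b + a * d b)
    (n : ℕ) (hn : 1 ≤ n)
    (D : Agen F n → Agen F n)
    (hD_add : ∀ a b, D (a + b) = D a + D b)
    (hD_mul : ∀ a b, D (a * b) = D a * b + a * D b)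
    (hD_C : ∀ f : F, D (C f) = C (d f))
    (hD_Y : ∀ (i j : Fin n) (k : ℕ),
      D (X (i, j, k)) = X (i, j, k + 1))
    (h g : Agen F n) (hDh : D h = g * h) :
    h ∈ Set.range (C : F → Agen F n) := by
  by_contra hconst
  have hvars : h.vars.Nonempty := by
    rw [Finset.nonempty_iff_ne_empty]
    exact fun h0 => hconst ⟨_, (vars_eq_empty_iff_eq_C.mp h0).symm⟩
  obtain ⟨⟨i, j, k⟩, hv, hmax⟩ := Finset.exists_max_image h.vars (fun u => u.2.2) hvars
  have hw : (i, j, k + 1) ∉ h.vars := fun hw => by simpa using hmax _ hw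
  have hw0 := pderiv_eq_zero_of_notMem_vars hw
  have hcomm := Agen.pderiv_succ_derivation hD_add hD_mul hD_C hD_Y i j k h
  have hD_zero : D 0 = 0 := by simpa using hD_add 0 0
  rw [hDh, pderiv_mul, hw0, hD_zero, mul_zero, add_zero, zero_add] at hcomm
  exact notMem_vars_of_pderiv_eq_mul hcomm.symm hv
end

section
/- For every p ∈ R and every exponent vector α : (Fin n × Fin n) →₀ ℕ, write p = Σ_β p_β·X^β with coefficients p_β ∈ F{Y} (where X^β = ∏_{i,j} X_{ij}^{β_{ij}}); note that D maps F{Y} into itself. Then the coefficient of X^α in D(p) equals D(p_α) + (Σ_{i=1}^n Σ_{j=1}^n α_{ij}·Y_{ii})·p_α + Σ_{i=1}^n Σ_{j=1}^n Σ_{ℓ ≠ i} τ_{ij,ℓ}, where τ_{ij,ℓ} = (α_{ij}+1)·Y_{iℓ}·p_{α_{ij,ℓ}} if α_{ℓj} ≥ 1 and τ_{ij,ℓ} = 0 if α_{ℓj} = 0, and α_{ij,ℓ} := α + e_{ij} − e_{ℓj} (e_{ij} being the exponent vector of the single variable X_{ij}). -/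
open MvPolynomial

/-- The coefficient `p_β ∈ F{Y} ⊆ R` of the monomial `X^β` when `p ∈ R` is written as
`p = ∑_β p_β • X^β` with coefficients involving only the `Y`-variables. -/
noncomputable def coeffX {F : Type*} [Field F] {n : ℕ}
    (p : Rgen F n) (β : (Fin n × Fin n) →₀ ℕ) : Rgen F n :=
  rename Sum.inl
    (coeff β
      ((sumAlgEquiv F (Fin n × Fin n) (Fin n × Fin n × ℕ))
        ((renameEquiv F (Equiv.sumComm (Fin n × Fin n × ℕ) (Fin n × Fin n))) p)))

/-- `R` as the ring of polynomials in the `X` variables with coefficients in `F{Y}`. -/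
noncomputable def iterX (F : Type*) [Field F] (n : ℕ) :
    Rgen F n ≃ₐ[F] MvPolynomial (Fin n × Fin n) (MvPolynomial (Fin n × Fin n × ℕ) F) :=
  (renameEquiv F (Equiv.sumComm (Fin n × Fin n × ℕ) (Fin n × Fin n))).trans
    (sumAlgEquiv F (Fin n × Fin n) (Fin n × Fin n × ℕ))

section CoeffX

variable {F : Type*} [Field F] {n : ℕ}

theorem coeffX_eq (p : Rgen F n) (β : (Fin n × Fin n) →₀ ℕ) :
    coeffX p β = rename Sum.inl (coeff β (iterX F n p)) := rfl

theorem iterX_C (f : F) : iterX F n (C f) = C (C f) := by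
  simp [iterX]

theorem iterX_X_inl (v : Fin n × Fin n × ℕ) : iterX F n (X (Sum.inl v)) = C (X v) := by
  simp [iterX]

theorem iterX_X_inr (v : Fin n × Fin n) : iterX F n (X (Sum.inr v)) = X v := by
  simp [iterX]

theorem iterX_pderiv (s : Fin n × Fin n) (p : Rgen F n) :
    iterX F n (pderiv (Sum.inr s) p) = pderiv s (iterX F n p) := by
  induction p using MvPolynomial.induction_on with
  | C a => simp [iterX_C]
  | add p q hp hq => simp [hp, hq]
  | mul_X p v hp =>
    rcases v with v | v
    · simp [Derivation.leibniz, hp, iterX_X_inl]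
    · by_cases h : s = v
      · subst h; simp [Derivation.leibniz, hp, iterX_X_inr]
      · simp [Derivation.leibniz, hp, iterX_X_inr, pderiv_X, Ne.symm h]

theorem coeffX_add (p q : Rgen F n) (β : (Fin n × Fin n) →₀ ℕ) :
    coeffX (p + q) β = coeffX p β + coeffX q β := by
  simp [coeffX_eq]

theorem coeffX_sum {ι : Type*} (s : Finset ι) (f : ι → Rgen F n) (β : (Fin n × Fin n) →₀ ℕ) :
    coeffX (∑ i ∈ s, f i) β = ∑ i ∈ s, coeffX (f i) β := by
  simp [coeffX_eq, coeff_sum]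

theorem coeffX_C (f : F) (β : (Fin n × Fin n) →₀ ℕ) :
    coeffX (C f : Rgen F n) β = if 0 = β then C f else 0 := by
  rw [coeffX_eq, iterX_C, coeff_C]
  split_ifs <;> simp

theorem coeffX_Y_mul (v : Fin n × Fin n × ℕ) (p : Rgen F n) (β : (Fin n × Fin n) →₀ ℕ) :
    coeffX (X (Sum.inl v) * p) β = X (Sum.inl v) * coeffX p β := by
  simp [coeffX_eq, iterX_X_inl, coeff_C_mul]

theorem coeffX_X_mul (v : Fin n × Fin n) (p : Rgen F n) (β : (Fin n × Fin n) →₀ ℕ) :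
    coeffX (X (Sum.inr v) * p) β =
      if 1 ≤ β v then coeffX p (β - Finsupp.single v 1) else 0 := by
  rw [coeffX_eq, map_mul, iterX_X_inr, coeff_X_mul']
  simp only [Finsupp.mem_support_iff, Nat.one_le_iff_ne_zero]
  split_ifs <;> simp [coeffX_eq]

theorem coeffX_pderiv (v : Fin n × Fin n) (p : Rgen F n) (β : (Fin n × Fin n) →₀ ℕ) :
    coeffX (pderiv (Sum.inr v) p) β = (β v + 1) • coeffX p (β + Finsupp.single v 1) := by
  rw [coeffX_eq, iterX_pderiv, coeff_pderiv, coeffX_eq]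
  simp [mul_comm]

/-- The derivation of `R` that is trivial on `F{Y}` and sends the matrix `X` to `Y * X`. -/
noncomputable def linearX (F : Type*) [Field F] (n : ℕ) : Derivation F (Rgen F n) (Rgen F n) :=
  ∑ i : Fin n, ∑ j : Fin n, ∑ l : Fin n,
    (X (Sum.inl (i, l, 0)) * X (Sum.inr (l, j)) : Rgen F n) • pderiv (Sum.inr (i, j))

theorem linearX_apply (p : Rgen F n) :
    linearX F n p = ∑ i : Fin n, ∑ j : Fin n, ∑ l : Fin n,
      X (Sum.inl (i, l, 0)) * (X (Sum.inr (l, j)) * pderiv (Sum.inr (i, j)) p) := by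
  change Derivation.coeFnAddMonoidHom (linearX F n) p = _
  simp [linearX, map_sum, Finset.sum_apply, Derivation.coeFnAddMonoidHom, mul_assoc]

theorem linearX_X_inl (v : Fin n × Fin n × ℕ) : linearX F n (X (Sum.inl v)) = 0 := by
  simp [linearX_apply]

theorem linearX_X_inr (i j : Fin n) :
    linearX F n (X (Sum.inr (i, j))) =
      ∑ l : Fin n, X (Sum.inl (i, l, 0)) * X (Sum.inr (l, j)) := by
  rw [linearX_apply, Finset.sum_eq_single i, Finset.sum_eq_single j]
  · simp
  · intro b _ hb
    simp [pderiv_X, hb.symm]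
  · simp
  · intro b _ hb
    simp [pderiv_X, hb.symm]
  · simp

theorem coeffX_Y_mul_X_mul_pderiv (i j l : Fin n) (p : Rgen F n)
    (α : (Fin n × Fin n) →₀ ℕ) (hl : l ≠ i) :
    coeffX (X (Sum.inl (i, l, 0)) * (X (Sum.inr (l, j)) * pderiv (Sum.inr (i, j)) p)) α =
      if 1 ≤ α (l, j) then
        (α (i, j) + 1) •
          (X (Sum.inl (i, l, (0 : ℕ))) *
            coeffX p (α + Finsupp.single (i, j) 1 - Finsupp.single (l, j) 1))
      else 0 := by
  rw [coeffX_Y_mul, coeffX_X_mul]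
  split_ifs with h
  · have hle : Finsupp.single (l, j) 1 ≤ α := by simpa using h
    rw [coeffX_pderiv, tsub_add_eq_add_tsub hle, mul_smul_comm]
    simp [hl]
  · simp

theorem coeffX_Y_mul_X_mul_pderiv_self (i j : Fin n) (p : Rgen F n)
    (α : (Fin n × Fin n) →₀ ℕ) :
    coeffX (X (Sum.inl (i, i, 0)) * (X (Sum.inr (i, j)) * pderiv (Sum.inr (i, j)) p)) α =
      α (i, j) • X (Sum.inl (i, i, (0 : ℕ))) * coeffX p α := by
  rw [coeffX_Y_mul, coeffX_X_mul]
  split_ifs with h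
  · have hle : Finsupp.single (i, j) 1 ≤ α := by simpa using h
    rw [coeffX_pderiv, tsub_add_cancel_of_le hle, mul_smul_comm, smul_mul_assoc]
    simp [Nat.sub_add_cancel h]
  · have h0 : α (i, j) = 0 := by omega
    simp [h0]

theorem coeffX_linearX (p : Rgen F n) (α : (Fin n × Fin n) →₀ ℕ) :
    coeffX (linearX F n p) α =
      (∑ i : Fin n, ∑ j : Fin n, α (i, j) • X (Sum.inl (i, i, (0 : ℕ)))) * coeffX p α
      + ∑ i : Fin n, ∑ j : Fin n, ∑ l ∈ Finset.univ.erase i,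
          (if 1 ≤ α (l, j) then
            (α (i, j) + 1) •
              (X (Sum.inl (i, l, (0 : ℕ))) *
                coeffX p (α + Finsupp.single (i, j) 1 - Finsupp.single (l, j) 1))
          else 0) := by
  simp only [linearX_apply, coeffX_sum, Finset.sum_mul, ← Finset.sum_add_distrib]
  refine Finset.sum_congr rfl fun i _ => Finset.sum_congr rfl fun j _ => ?_
  rw [← Finset.add_sum_erase _ _ (Finset.mem_univ i), coeffX_Y_mul_X_mul_pderiv_self]
  exact congrArg _ (Finset.sum_congr rfl fun l hl =>
    coeffX_Y_mul_X_mul_pderiv i j l p α (Finset.ne_of_mem_erase hl))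

/-- `D - linearX F n` kills the variables `X`, hence acts on the coefficients in `F{Y}` as `D`. -/
theorem coeffX_sub_linearX (d : F → F) (D : Rgen F n → Rgen F n)
    (hD_add : ∀ a b, D (a + b) = D a + D b)
    (hD_mul : ∀ a b, D (a * b) = D a * b + a * D b)
    (hD_C : ∀ f : F, D (C f) = C (d f))
    (hD_Y : ∀ (i j : Fin n) (k : ℕ),
      D (X (Sum.inl (i, j, k))) = X (Sum.inl (i, j, k + 1)))
    (hD_X : ∀ i j : Fin n,
      D (X (Sum.inr (i, j))) = ∑ l : Fin n, X (Sum.inl (i, l, 0)) * X (Sum.inr (l, j)))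
    (p : Rgen F n) (α : (Fin n × Fin n) →₀ ℕ) :
    coeffX (D p - linearX F n p) α = D (coeffX p α) := by
  have hD_zero : D 0 = 0 := by simpa using hD_add 0 0
  induction p using MvPolynomial.induction_on generalizing α with
  | C a =>
    rw [hD_C, derivation_C, sub_zero, coeffX_C, coeffX_C]
    split_ifs <;> simp [hD_C, hD_zero]
  | add p q hp hq =>
    rw [coeffX_add, hD_add, hD_add, ← hp, ← hq, ← coeffX_add, map_add, add_sub_add_comm]
  | mul_X p v hp =>
    rcases v with ⟨i, j, k⟩ | ⟨i, j⟩
    · have h : D (p * X (Sum.inl (i, j, k))) - linearX F n (p * X (Sum.inl (i, j, k))) =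
          X (Sum.inl (i, j, k)) * (D p - linearX F n p) + X (Sum.inl (i, j, k + 1)) * p := by
        rw [hD_mul, Derivation.leibniz, linearX_X_inl, hD_Y, smul_eq_mul, smul_eq_mul]
        ring
      rw [h, coeffX_add, coeffX_Y_mul, coeffX_Y_mul, hp, mul_comm p, coeffX_Y_mul, hD_mul, hD_Y]
      ring
    · have h : D (p * X (Sum.inr (i, j))) - linearX F n (p * X (Sum.inr (i, j))) =
          X (Sum.inr (i, j)) * (D p - linearX F n p) := by
        rw [hD_mul, Derivation.leibniz, linearX_X_inr, hD_X, smul_eq_mul, smul_eq_mul]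
        ring
      rw [h, coeffX_X_mul, mul_comm p, coeffX_X_mul]
      split_ifs
      · exact hp _
      · exact hD_zero.symm

end CoeffX

/-- The formula for the coefficient of `X^α` in `D p`. -/
theorem stmt_5
    {F : Type*} [Field F] [CharZero F] (d : F → F)
    (hd_add : ∀ a b : F, d (a + b) = d a + d b)
    (hd_mul : ∀ a b : F, d (a * b) = d a * b + a * d b)
    (n : ℕ) (hn : 1 ≤ n)
    (D : Rgen F n → Rgen F n)
    (hD_add : ∀ a b, D (a + b) = D a + D b)
    (hD_mul : ∀ a b, D (a * b) = D a * b + a * D b)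
    (hD_C : ∀ f : F, D (C f) = C (d f))
    (hD_Y : ∀ (i j : Fin n) (k : ℕ),
      D (X (Sum.inl (i, j, k))) = X (Sum.inl (i, j, k + 1)))
    (hD_X : ∀ i j : Fin n,
      D (X (Sum.inr (i, j))) = ∑ l : Fin n, X (Sum.inl (i, l, 0)) * X (Sum.inr (l, j)))
    (p : Rgen F n) (α : (Fin n × Fin n) →₀ ℕ) :
    coeffX (D p) α =
      D (coeffX p α)
      + (∑ i : Fin n, ∑ j : Fin n, α (i, j) • X (Sum.inl (i, i, (0 : ℕ)))) * coeffX p α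
      + ∑ i : Fin n, ∑ j : Fin n, ∑ l ∈ Finset.univ.erase i,
          (if 1 ≤ α (l, j) then
            (α (i, j) + 1) •
              (X (Sum.inl (i, l, (0 : ℕ))) *
                coeffX p (α + Finsupp.single (i, j) 1 - Finsupp.single (l, j) 1))
          else 0) := by
  rw [← sub_add_cancel (D p) (linearX F n p), coeffX_add, coeffX_linearX, ← add_assoc,
    coeffX_sub_linearX d D hD_add hD_mul hD_C hD_Y hD_X]
end

section
/- If p, q ∈ R satisfy p ≠ 0 and D(p) = q·p, then q ∈ F{Y}, i.e. q involves no X-variables. (This holds because the total degree of p with respect to the X_{ij} is unchanged by D.) -/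
open MvPolynomial

/-- The `F`-algebra map `R → R[t]` that fixes every `Y i j k` and sends `X i j` to `X i j * t`. The
degree in `t` of the image of `p` is the total degree of `p` in the variables `X i j`. -/
noncomputable def scaleX (F : Type*) [Field F] (n : ℕ) :
    Rgen F n →ₐ[F] Polynomial (Rgen F n) :=
  aeval (Sum.elim (fun v => Polynomial.C (X (Sum.inl v)))
    (fun v => Polynomial.C (X (Sum.inr v)) * Polynomial.X))

section scaleX

variable {F : Type*} [Field F] {n : ℕ}

@[simp]
theorem scaleX_C (a : F) : scaleX F n (C a) = Polynomial.C (C a) := by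
  rw [scaleX, aeval_C]
  rfl

@[simp]
theorem scaleX_X_inl (v : Fin n × Fin n × ℕ) :
    scaleX F n (X (Sum.inl v)) = Polynomial.C (X (Sum.inl v)) := by
  simp [scaleX]

@[simp]
theorem scaleX_X_inr (v : Fin n × Fin n) :
    scaleX F n (X (Sum.inr v)) = Polynomial.C (X (Sum.inr v)) * Polynomial.X := by
  simp [scaleX]

theorem eval_one_scaleX (p : Rgen F n) : (scaleX F n p).eval 1 = p := by
  induction p using MvPolynomial.induction_on with
  | C a => simp
  | add p q hp hq => rw [map_add, Polynomial.eval_add, hp, hq]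
  | mul_X p v hp => rcases v with v | v <;> simp [hp]

theorem scaleX_injective : Function.Injective (scaleX F n) :=
  Function.LeftInverse.injective eval_one_scaleX

theorem eval_zero_scaleX_mem_FY (p : Rgen F n) : (scaleX F n p).eval 0 ∈ FY F n := by
  induction p using MvPolynomial.induction_on with
  | C a =>
    rw [scaleX_C, Polynomial.eval_C]
    exact (FY F n).algebraMap_mem a
  | add p q hp hq =>
    rw [map_add, Polynomial.eval_add]
    exact add_mem hp hq
  | mul_X p v hp =>
    rw [map_mul, Polynomial.eval_mul]
    refine mul_mem hp ?_
    rcases v with v | v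
    · rw [scaleX_X_inl, Polynomial.eval_C]
      exact Algebra.subset_adjoin ⟨v, rfl⟩
    · simp

theorem mem_FY_of_natDegree_scaleX_eq_zero {p : Rgen F n}
    (h : (scaleX F n p).natDegree = 0) : p ∈ FY F n := by
  have hp := eval_zero_scaleX_mem_FY p
  rw [Polynomial.eq_C_of_natDegree_eq_zero h, Polynomial.eval_C] at hp
  rwa [← eval_one_scaleX p, Polynomial.eq_C_of_natDegree_eq_zero h, Polynomial.eval_C]

/-- A derivation of `R` that is homogeneous of degree zero in the `X i j` corresponds under `scaleX`
to its coefficientwise action on `R[t]`. -/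
theorem coeff_scaleX_derivation (D : Derivation ℤ (Rgen F n) (Rgen F n)) (d : F → F)
    (hD_C : ∀ f : F, D (C f) = C (d f))
    (hD_Y : ∀ (i j : Fin n) (k : ℕ),
      D (X (Sum.inl (i, j, k))) = X (Sum.inl (i, j, k + 1)))
    (hD_X : ∀ i j : Fin n,
      D (X (Sum.inr (i, j))) = ∑ l : Fin n, X (Sum.inl (i, l, 0)) * X (Sum.inr (l, j)))
    (p : Rgen F n) (m : ℕ) : (scaleX F n (D p)).coeff m = D ((scaleX F n p).coeff m) := by
  induction p using MvPolynomial.induction_on generalizing m with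
  | C a => simp [hD_C, Polynomial.coeff_C, apply_ite D]
  | add p q hp hq => simp only [map_add, Polynomial.coeff_add, hp, hq]
  | mul_X p v hp =>
    have hv (m : ℕ) : (scaleX F n (D (X v))).coeff m = D ((scaleX F n (X v)).coeff m) := by
      rcases v with ⟨i, j, k⟩ | ⟨i, j⟩
      · simp [hD_Y, Polynomial.coeff_C, apply_ite D]
      · simp [hD_X, Polynomial.coeff_X, apply_ite D, Finset.sum_ite_irrel]
    simp only [Derivation.leibniz, map_add, map_mul, smul_eq_mul, Polynomial.coeff_add, map_sum,
      mul_comm (scaleX F n (X v)), Polynomial.coeff_mul, hp, hv, Finset.sum_add_distrib]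
    simp only [mul_comm]

theorem natDegree_scaleX_derivation_le (D : Derivation ℤ (Rgen F n) (Rgen F n)) (d : F → F)
    (hD_C : ∀ f : F, D (C f) = C (d f))
    (hD_Y : ∀ (i j : Fin n) (k : ℕ),
      D (X (Sum.inl (i, j, k))) = X (Sum.inl (i, j, k + 1)))
    (hD_X : ∀ i j : Fin n,
      D (X (Sum.inr (i, j))) = ∑ l : Fin n, X (Sum.inl (i, l, 0)) * X (Sum.inr (l, j)))
    (p : Rgen F n) : (scaleX F n (D p)).natDegree ≤ (scaleX F n p).natDegree := by
  refine Polynomial.natDegree_le_iff_coeff_eq_zero.2 fun m hm => ?_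
  rw [coeff_scaleX_derivation D d hD_C hD_Y hD_X, Polynomial.coeff_eq_zero_of_natDegree_lt hm,
    map_zero]

end scaleX

/-- If `p ≠ 0` and `D p = q * p`, then the cofactor `q` lies in `F{Y}`,
i.e. involves no `X`-variables. -/
theorem stmt_6
    {F : Type*} [Field F] [CharZero F] (d : F → F)
    (hd_add : ∀ a b : F, d (a + b) = d a + d b)
    (hd_mul : ∀ a b : F, d (a * b) = d a * b + a * d b)
    (n : ℕ) (hn : 1 ≤ n)
    (D : Rgen F n → Rgen F n)
    (hD_add : ∀ a b, D (a + b) = D a + D b)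
    (hD_mul : ∀ a b, D (a * b) = D a * b + a * D b)
    (hD_C : ∀ f : F, D (C f) = C (d f))
    (hD_Y : ∀ (i j : Fin n) (k : ℕ),
      D (X (Sum.inl (i, j, k))) = X (Sum.inl (i, j, k + 1)))
    (hD_X : ∀ i j : Fin n,
      D (X (Sum.inr (i, j))) = ∑ l : Fin n, X (Sum.inl (i, l, 0)) * X (Sum.inr (l, j)))
    (p q : Rgen F n) (hp : p ≠ 0) (hDp : D p = q * p) :
    q ∈ FY F n := by
  let D' : Derivation ℤ (Rgen F n) (Rgen F n) :=
    Derivation.mk' (AddMonoidHom.mk' D hD_add).toIntLinearMap fun a b => by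
      simp [hD_mul, mul_comm, add_comm]
  have hle : (scaleX F n (D p)).natDegree ≤ (scaleX F n p).natDegree :=
    natDegree_scaleX_derivation_le D' d hD_C hD_Y hD_X p
  refine mem_FY_of_natDegree_scaleX_eq_zero ?_
  by_cases hq : q = 0
  · simp [hq]
  rw [hDp, map_mul, Polynomial.natDegree_mul
    ((map_ne_zero_iff _ scaleX_injective).2 hq) ((map_ne_zero_iff _ scaleX_injective).2 hp)] at hle
  omega
end

section
/- If p ∈ R and q ∈ F{Y} satisfy D(p) = q·p, then p ∈ F[X], i.e. p involves none of the Y-variables. -/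
open MvPolynomial

/-- In characteristic zero, a polynomial with vanishing partial derivative in the direction `v`
does not involve the variable `v`. -/
theorem notMem_vars_of_pderiv_eq_zero {σ K : Type*} [Field K] [CharZero K] {v : σ}
    {p : MvPolynomial σ K} (h : pderiv v p = 0) : v ∉ p.vars := by
  classical
  rw [mem_vars_iff_mem_support]
  rintro ⟨m, hm, hv⟩
  have hle : Finsupp.single v 1 ≤ m := by
    rw [Finsupp.single_le_iff]
    exact Nat.one_le_iff_ne_zero.2 (Finsupp.mem_support_iff.1 hv)
  have hc := coeff_pderiv (i := v) p (m - Finsupp.single v 1)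
  rw [h, coeff_zero, tsub_add_cancel_of_le hle, eq_comm, mul_eq_zero] at hc
  exact hc.elim (mem_support_iff.1 hm) (Nat.cast_add_one_ne_zero _)

theorem degreeOf_pderiv_lt {σ K : Type*} [CommSemiring K] {v : σ} {p : MvPolynomial σ K}
    (h : pderiv v p ≠ 0) : degreeOf v (pderiv v p) < degreeOf v p := by
  have key : ∀ m ∈ (pderiv v p).support, m v < degreeOf v p := by
    intro m hm
    rw [mem_support_iff, coeff_pderiv] at hm
    have := monomial_le_degreeOf v (mem_support_iff.2 (left_ne_zero_of_mul hm))
    simp only [Finsupp.add_apply, Finsupp.single_eq_same] at this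
    omega
  obtain ⟨m, hm⟩ := support_nonempty.2 h
  exact (degreeOf_lt_iff (Nat.zero_lt_of_lt (key m hm))).2 key

/-- A polynomial that divides its own partial derivative has vanishing partial derivative. -/
theorem pderiv_eq_zero_of_dvd {σ K : Type*} [Field K] {v : σ} {p : MvPolynomial σ K}
    (h : p ∣ pderiv v p) : pderiv v p = 0 := by
  by_contra hne
  have hlt := degreeOf_pderiv_lt hne
  obtain ⟨c, hc⟩ := h
  rw [hc] at hne hlt
  rw [degreeOf_mul_eq (left_ne_zero_of_mul hne) (right_ne_zero_of_mul hne)] at hlt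
  omega

/-- The commutation rule `[∂/∂Y_{ij,k+1}, D] = ∂/∂Y_{ij,k}`. -/
theorem pderiv_succ_comp_derivation {F : Type*} [Field F] (d : F → F) (n : ℕ)
    (D : Rgen F n → Rgen F n)
    (hD_add : ∀ a b, D (a + b) = D a + D b)
    (hD_mul : ∀ a b, D (a * b) = D a * b + a * D b)
    (hD_C : ∀ f : F, D (C f) = C (d f))
    (hD_Y : ∀ (i j : Fin n) (k : ℕ),
      D (X (Sum.inl (i, j, k))) = X (Sum.inl (i, j, k + 1)))
    (hD_X : ∀ i j : Fin n,
      D (X (Sum.inr (i, j))) = ∑ l : Fin n, X (Sum.inl (i, l, 0)) * X (Sum.inr (l, j)))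
    (i j : Fin n) (k : ℕ) (p : Rgen F n) :
    pderiv (Sum.inl (i, j, k + 1)) (D p) =
      D (pderiv (Sum.inl (i, j, k + 1)) p) + pderiv (Sum.inl (i, j, k)) p := by
  classical
  have hD_zero : D 0 = 0 := by simpa using hD_add 0 0
  have hD_one : D 1 = 0 := by simpa using hD_mul 1 1
  induction p using MvPolynomial.induction_on with
  | C a => simp [hD_C, hD_zero]
  | add p q hp hq =>
    simp only [hD_add, map_add, hp, hq]
    ring
  | mul_X p v hp =>
    have hv : pderiv (Sum.inl (i, j, k + 1)) (D (X v)) =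
        D (pderiv (Sum.inl (i, j, k + 1)) (X v)) + pderiv (Sum.inl (i, j, k)) (X v) := by
      rcases v with ⟨a, b, l⟩ | ⟨a, b⟩
      · have hconst : D (pderiv (Sum.inl (i, j, k + 1)) (X (Sum.inl (a, b, l)))) = 0 := by
          rw [pderiv_X, Pi.single_apply]
          split_ifs <;> assumption
        rw [hconst, hD_Y, pderiv_X, pderiv_X]
        simp [Pi.single_apply]
      · simp [hD_X, hD_zero, pderiv_X]
    simp only [hD_mul, hD_add, map_add, pderiv_mul, hp, hv]
    ring

/-- If `p ∈ R` and `q ∈ F{Y}` satisfy `D p = q * p`, then `p ∈ F[X]`,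
i.e. `p` involves none of the `Y`-variables. -/
theorem stmt_7
    {F : Type*} [Field F] [CharZero F] (d : F → F)
    (hd_add : ∀ a b : F, d (a + b) = d a + d b)
    (hd_mul : ∀ a b : F, d (a * b) = d a * b + a * d b)
    (n : ℕ) (hn : 1 ≤ n)
    (D : Rgen F n → Rgen F n)
    (hD_add : ∀ a b, D (a + b) = D a + D b)
    (hD_mul : ∀ a b, D (a * b) = D a * b + a * D b)
    (hD_C : ∀ f : F, D (C f) = C (d f))
    (hD_Y : ∀ (i j : Fin n) (k : ℕ),
      D (X (Sum.inl (i, j, k))) = X (Sum.inl (i, j, k + 1)))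
    (hD_X : ∀ i j : Fin n,
      D (X (Sum.inr (i, j))) = ∑ l : Fin n, X (Sum.inl (i, l, 0)) * X (Sum.inr (l, j)))
    (p q : Rgen F n) (hq : q ∈ FY F n) (hDp : D p = q * p) :
    p ∈ FX F n := by
  have hzero : ∀ (i j : Fin n) (k : ℕ), pderiv (Sum.inl (i, j, k)) p = 0 := by
    intro i j k
    by_contra hk
    have hall : ∀ l, pderiv (Sum.inl (i, j, k + l)) p ≠ 0 := by
      intro l
      induction l with
      | zero => exact hk
      | succ l ih =>
        intro h
        refine ih (pderiv_eq_zero_of_dvd ⟨pderiv (Sum.inl (i, j, k + l + 1)) q, ?_⟩)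
        have hcomm := pderiv_succ_comp_derivation d n D hD_add hD_mul hD_C hD_Y hD_X
          i j (k + l) p
        rw [← add_assoc] at h
        have hD_zero : D 0 = 0 := by simpa using hD_add 0 0
        rw [hDp, pderiv_mul, h, hD_zero, mul_zero, add_zero, zero_add] at hcomm
        rw [← hcomm, mul_comm]
    have hinj : Function.Injective
        fun l : ℕ => (Sum.inl (i, j, k + l) : (Fin n × Fin n × ℕ) ⊕ (Fin n × Fin n)) := by
      intro a b hab
      simpa using hab
    refine Set.infinite_range_of_injective hinj (p.vars.finite_toSet.subset ?_)
    rintro _ ⟨l, rfl⟩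
    by_contra hl
    exact hall l (pderiv_eq_zero_of_notMem_vars hl)
  have hFX : FX F n = supported F (Set.range Sum.inr) := by
    rw [FX, supported_eq_adjoin_X, ← Set.range_comp]
    rfl
  rw [hFX, mem_supported]
  rintro (⟨i, j, k⟩ | v) hv
  · exact absurd hv (notMem_vars_of_pderiv_eq_zero (hzero i j k))
  · exact ⟨v, rfl⟩
end

section
/- Let p ∈ F[X] be nonzero and q ∈ F{Y}, and suppose D(p) = q·p. Then q is a linear polynomial in the order-zero variables Y_{ij}: there exist c ∈ F and λ_{ij} ∈ F (1 ≤ i,j ≤ n) such that q = C(c) + Σ_{i,j} C(λ_{ij})·Y_{ij}. Moreover, for every i and every monomial of p with exponent vector β (so β_{ij} is the exponent of X_{ij} in that monomial), the coefficient λ_{ii} of Y_{ii} equals the row sum Σ_{j=1}^n β_{ij} (cast from ℕ into F); in particular, the sums Σ_{j=1}^n β_{ij} (1 ≤ i ≤ n) are independent of the choice of monomial of p. -/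
open MvPolynomial

/-- The polarization operator `∑ j, X l j * ∂/∂X i j`, i.e. the coefficient of `Y i l` in the
derivation of `F{Y}[X]` sending the matrix `X` to `Y * X`. -/
noncomputable def rowPolarization {F : Type*} [Field F] {n : ℕ} (i l : Fin n)
    (p : MvPolynomial (Fin n × Fin n) F) : MvPolynomial (Fin n × Fin n) F :=
  ∑ j : Fin n, X (l, j) * pderiv (i, j) p

section RowPolarization

variable {F : Type*} [Field F] {n : ℕ}

theorem rowPolarization_C (i l : Fin n) (a : F) : rowPolarization i l (C a) = 0 := by
  simp [rowPolarization]

theorem rowPolarization_add (i l : Fin n) (p q : MvPolynomial (Fin n × Fin n) F) :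
    rowPolarization i l (p + q) = rowPolarization i l p + rowPolarization i l q := by
  simp [rowPolarization, mul_add, Finset.sum_add_distrib]

theorem rowPolarization_mul_X (i l a b : Fin n) (p : MvPolynomial (Fin n × Fin n) F) :
    rowPolarization i l (p * X (a, b)) =
      rowPolarization i l p * X (a, b) + if i = a then p * X (l, b) else 0 := by
  have h (j : Fin n) : X (l, j) * pderiv (i, j) (p * X (a, b)) =
      X (l, j) * pderiv (i, j) p * X (a, b) +
        if b = j then (if i = a then p * X (l, b) else 0) else 0 := by
    rw [pderiv_mul, pderiv_X]
    by_cases hb : b = j <;> by_cases ha : i = a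
    · subst hb ha
      simp
      ring
    all_goals
      have hne : (a, b) ≠ (i, j) := by
        rw [Ne, Prod.mk.injEq]
        tauto
      simp [hne, hb, ha, mul_assoc]
  simp only [rowPolarization, h, Finset.sum_add_distrib, Finset.sum_mul]
  simp

/-- The diagonal operators scale each monomial by the degree in the corresponding row. -/
theorem coeff_rowPolarization_self (i : Fin n) (p : MvPolynomial (Fin n × Fin n) F)
    (β : Fin n × Fin n →₀ ℕ) :
    coeff β (rowPolarization i i p) = ((∑ j : Fin n, β (i, j) : ℕ) : F) * coeff β p := by
  induction p using MvPolynomial.induction_on' with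
  | monomial m a =>
    simp only [rowPolarization, X_mul_pderiv_monomial, coeff_sum, coeff_smul, coeff_monomial]
    split_ifs with h
    · subst h
      simp [Finset.sum_mul]
    · simp
  | add p q hp hq => rw [rowPolarization_add, coeff_add, hp, hq, coeff_add, mul_add]

/-- The derivative of a polynomial in the `X i j` has degree at most one in the `Y i j`, with
linear coefficients given by the polarization operators. -/
theorem exists_derivation_rename_inr_eq (d : F → F) (D : Rgen F n → Rgen F n)
    (hD_add : ∀ a b, D (a + b) = D a + D b)
    (hD_mul : ∀ a b, D (a * b) = D a * b + a * D b)
    (hD_C : ∀ f : F, D (C f) = C (d f))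
    (hD_X : ∀ i j : Fin n,
      D (X (Sum.inr (i, j))) = ∑ l : Fin n, X (Sum.inl (i, l, 0)) * X (Sum.inr (l, j)))
    (p : MvPolynomial (Fin n × Fin n) F) :
    ∃ r : MvPolynomial (Fin n × Fin n) F, D (rename Sum.inr p) = rename Sum.inr r +
      ∑ i : Fin n, ∑ l : Fin n,
        X (Sum.inl (i, l, 0)) * rename Sum.inr (rowPolarization i l p) := by
  induction p using MvPolynomial.induction_on with
  | C a => exact ⟨C (d a), by simp [hD_C, rowPolarization_C]⟩
  | add p q hp hq =>
    obtain ⟨r, hr⟩ := hp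
    obtain ⟨s, hs⟩ := hq
    refine ⟨r + s, ?_⟩
    simp only [map_add, hD_add, hr, hs, rowPolarization_add, mul_add, Finset.sum_add_distrib]
    ring
  | mul_X p v hp =>
    obtain ⟨a, b⟩ := v
    obtain ⟨r, hr⟩ := hp
    refine ⟨r * X (a, b), ?_⟩
    have h (i l : Fin n) : (X (Sum.inl (i, l, 0)) : Rgen F n) *
        rename Sum.inr (rowPolarization i l (p * X (a, b))) =
        X (Sum.inl (i, l, 0)) * rename Sum.inr (rowPolarization i l p) * X (Sum.inr (a, b)) +
          if i = a then
            rename Sum.inr p * (X (Sum.inl (a, l, 0)) * X (Sum.inr (l, b))) else 0 := by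
      rw [rowPolarization_mul_X]
      split_ifs with hi
      · subst hi
        simp only [map_add, map_mul, rename_X]
        ring
      · simp [mul_assoc]
    simp only [h, Finset.sum_add_distrib, map_mul, rename_X, hD_mul, hr, hD_X]
    rw [Finset.sum_comm (f := fun i l => if i = a then _ else _)]
    simp only [Finset.sum_ite_eq', Finset.mem_univ, if_true, ← Finset.mul_sum, ← Finset.sum_mul]
    ring

/-- Comparison of the coefficients of a monomial in the `Y i j k`. -/
theorem C_coeff_mul_eq_of_rename_mul_eq {q : MvPolynomial (Fin n × Fin n × ℕ) F}
    {p r : MvPolynomial (Fin n × Fin n) F}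
    {s : Fin n → Fin n → MvPolynomial (Fin n × Fin n) F}
    (h : (rename Sum.inl q * rename Sum.inr p : Rgen F n) = rename Sum.inr r +
      ∑ i : Fin n, ∑ l : Fin n, X (Sum.inl (i, l, 0)) * rename Sum.inr (s i l))
    (m : Fin n × Fin n × ℕ →₀ ℕ) :
    C (coeff m q) * p = (if 0 = m then r else 0) +
      ∑ i : Fin n, ∑ l : Fin n, if Finsupp.single (i, l, 0) 1 = m then s i l else 0 := by
  have hr (f : MvPolynomial (Fin n × Fin n) F) :
      sumAlgEquiv F (Fin n × Fin n × ℕ) (Fin n × Fin n) (rename Sum.inr f) = C f := by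
    induction f using MvPolynomial.induction_on with
    | C a => simp
    | add f g hf hg => simp [hf, hg]
    | mul_X f v hf => simp [hf]
  have hl (f : MvPolynomial (Fin n × Fin n × ℕ) F) :
      sumAlgEquiv F (Fin n × Fin n × ℕ) (Fin n × Fin n) (rename Sum.inl f) = map C f := by
    induction f using MvPolynomial.induction_on with
    | C a => simp
    | add f g hf hg => simp [hf, hg]
    | mul_X f v hf => simp [hf]
  have key := congrArg (fun f => coeff m (sumAlgEquiv F (Fin n × Fin n × ℕ) (Fin n × Fin n) f)) h
  simpa [hr, hl, mul_comm _ (C _), coeff_sum, coeff_C_mul, coeff_C, coeff_X, coeff_map] using key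

end RowPolarization

/-- If `p ∈ F[X]` is nonzero, `q ∈ F{Y}` and `D p = q * p`, then `q` is
linear in the order-zero variables `Y i j`, and for every `i` the coefficient of `Y i i`
equals the `i`-th row sum of the exponent vector of every monomial of `p`; in particular
these row sums are independent of the monomial. -/
theorem stmt_8
    {F : Type*} [Field F] [CharZero F] (d : F → F)
    (hd_add : ∀ a b : F, d (a + b) = d a + d b)
    (hd_mul : ∀ a b : F, d (a * b) = d a * b + a * d b)
    (n : ℕ) (hn : 1 ≤ n)
    (D : Rgen F n → Rgen F n)
    (hD_add : ∀ a b, D (a + b) = D a + D b)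
    (hD_mul : ∀ a b, D (a * b) = D a * b + a * D b)
    (hD_C : ∀ f : F, D (C f) = C (d f))
    (hD_Y : ∀ (i j : Fin n) (k : ℕ),
      D (X (Sum.inl (i, j, k))) = X (Sum.inl (i, j, k + 1)))
    (hD_X : ∀ i j : Fin n,
      D (X (Sum.inr (i, j))) = ∑ l : Fin n, X (Sum.inl (i, l, 0)) * X (Sum.inr (l, j)))
    (p q : Rgen F n) (hp : p ∈ FX F n) (hp0 : p ≠ 0) (hq : q ∈ FY F n)
    (hDp : D p = q * p) :
    ∃ (c : F) (lam : Fin n → Fin n → F),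
      q = C c + ∑ i : Fin n, ∑ j : Fin n, C (lam i j) * X (Sum.inl (i, j, (0 : ℕ))) ∧
      ∀ i : Fin n, ∀ β ∈ p.support, lam i i = ((∑ j : Fin n, β (Sum.inr (i, j)) : ℕ) : F) := by
  obtain ⟨p, rfl⟩ : ∃ p', rename Sum.inr p' = p := by
    have : p ∈ (rename Sum.inr : MvPolynomial (Fin n × Fin n) F →ₐ[F] Rgen F n).range := by
      refine Algebra.adjoin_le ?_ hp
      rintro _ ⟨v, rfl⟩
      exact ⟨X v, rename_X _ _⟩
    exact this
  obtain ⟨q, rfl⟩ : ∃ q', rename Sum.inl q' = q := by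
    have : q ∈ (rename Sum.inl : MvPolynomial (Fin n × Fin n × ℕ) F →ₐ[F] Rgen F n).range := by
      refine Algebra.adjoin_le ?_ hq
      rintro _ ⟨v, rfl⟩
      exact ⟨X v, rename_X _ _⟩
    exact this
  have hp0' : p ≠ 0 := by
    rintro rfl
    simp at hp0
  obtain ⟨r, hr⟩ := exists_derivation_rename_inr_eq d D hD_add hD_mul hD_C hD_X p
  have key := C_coeff_mul_eq_of_rename_mul_eq (hDp.symm.trans hr)
  have hsingle (i l i' l' : Fin n) :
      (Finsupp.single (i', l', 0) 1 : Fin n × Fin n × ℕ →₀ ℕ) = Finsupp.single (i, l, 0) 1 ↔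
        i' = i ∧ l' = l := by
    simp [Finsupp.single_left_inj]
  refine ⟨coeff 0 q, fun i l => coeff (Finsupp.single (i, l, 0) 1) q, ?_, fun i β hβ => ?_⟩
  · have hq' : q = C (coeff 0 q) + ∑ i : Fin n, ∑ l : Fin n,
        C (coeff (Finsupp.single (i, l, 0) 1) q) * X (i, l, 0) := by
      ext m
      simp only [coeff_add, coeff_C, coeff_sum, coeff_C_mul, coeff_X, mul_ite, mul_one, mul_zero]
      by_cases h0 : 0 = m
      · subst h0
        simp
      by_cases h1 : ∃ i l : Fin n, Finsupp.single (i, l, 0) 1 = m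
      · obtain ⟨i, l, rfl⟩ := h1
        simp [hsingle, h0, ite_and]
      · push Not at h1
        have h := key m
        simp only [h0, h1, if_false, Finset.sum_const_zero, add_zero, mul_eq_zero, hp0',
          or_false, C_eq_zero] at h
        simp [h0, h1, h]
    conv_lhs => rw [hq']
    simp
  · rw [support_rename_of_injective Sum.inr_injective, Finset.mem_image] at hβ
    obtain ⟨γ, hγ, rfl⟩ := hβ
    have h := congrArg (coeff γ) (key (Finsupp.single (i, i, 0) 1))
    have hne : (0 : Fin n × Fin n × ℕ →₀ ℕ) ≠ Finsupp.single (i, i, 0) 1 :=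
      (Finsupp.single_ne_zero.mpr one_ne_zero).symm
    simp only [hsingle, ite_and, hne, if_false, zero_add, Finset.sum_ite_eq', Finset.mem_univ,
      if_true, Finset.sum_ite_irrel, Finset.sum_const_zero, coeff_C_mul,
      coeff_rowPolarization_self] at h
    simpa only [Finsupp.mapDomain_apply Sum.inr_injective] using
      mul_right_cancel₀ (mem_support_iff.mp hγ) h
end

section
/- Let p ∈ F[X] be nonzero and q ∈ F{Y} with D(p) = q·p. Then for any two exponent vectors β, γ of monomials occurring in p (elements of the support of p, regarded as exponent vectors in the X-variables) and every 1 ≤ i ≤ n, Σ_{j=1}^n β_{ij} = Σ_{j=1}^n γ_{ij}. In particular, all monomials of p have the same total degree, i.e. p is a homogeneous polynomial in the X_{ij}. -/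
open MvPolynomial

/-- The `F`-algebra endomorphism of `R` sending every `Y i j k` to `0` and fixing every `X i j`. -/
noncomputable def killY (F : Type*) [Field F] (n : ℕ) : Rgen F n →ₐ[F] Rgen F n :=
  aeval (Sum.elim (fun _ => 0) fun v => X (Sum.inr v))

/-- The Euler operator `∑ j, X i j * ∂/∂X i j` of the `i`-th row. -/
noncomputable def rowEuler (F : Type*) [Field F] (n : ℕ) (i : Fin n) :
    Derivation F (Rgen F n) (Rgen F n) :=
  ∑ j : Fin n, (X (Sum.inr (i, j)) : Rgen F n) • pderiv (Sum.inr (i, j))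

section

variable {F : Type*} [Field F] {n : ℕ}

theorem rowEuler_apply (i : Fin n) (p : Rgen F n) :
    rowEuler F n i p = ∑ j : Fin n, X (Sum.inr (i, j)) * pderiv (Sum.inr (i, j)) p := by
  rw [rowEuler, ← Derivation.coeFnAddMonoidHom_apply, map_sum, Finset.sum_apply]
  rfl

theorem coeff_X_mul_pderiv {σ R : Type*} [CommSemiring R] (v : σ) (p : MvPolynomial σ R)
    (β : σ →₀ ℕ) : coeff β (X v * pderiv v p) = β v * coeff β p := by
  classical
  induction p using MvPolynomial.monomial_add_induction_on with
  | C a =>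
    simp only [pderiv_C, mul_zero, coeff_zero, coeff_C]
    split_ifs with h
    · subst h; simp
    · simp
  | monomial_add s a f _ _ ih =>
    simp only [map_add, mul_add, coeff_add, ih, X_mul_pderiv_monomial, coeff_smul, coeff_monomial]
    split_ifs with h
    · subst h; simp
    · simp

theorem coeff_rowEuler (i : Fin n) (p : Rgen F n) (β) :
    coeff β (rowEuler F n i p) = (∑ j : Fin n, β (Sum.inr (i, j)) : ℕ) * coeff β p := by
  simp [rowEuler_apply, coeff_sum, coeff_X_mul_pderiv, Finset.sum_mul]

theorem killY_of_mem_FX {p : Rgen F n} (hp : p ∈ FX F n) : killY F n p = p := by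
  induction hp using Algebra.adjoin_induction with
  | mem x hx => obtain ⟨v, rfl⟩ := hx; simp [killY]
  | algebraMap r => simp
  | add x y _ _ hx hy => simp [hx, hy]
  | mul x y _ _ hx hy => simp [hx, hy]

theorem pderiv_inl_of_mem_FX (v : Fin n × Fin n × ℕ) {p : Rgen F n} (hp : p ∈ FX F n) :
    pderiv (Sum.inl v) p = 0 := by
  classical
  induction hp using Algebra.adjoin_induction with
  | mem x hx => obtain ⟨w, rfl⟩ := hx; simp [pderiv_X]
  | algebraMap r => simp
  | add x y _ _ hx hy => simp [hx, hy]
  | mul x y _ _ hx hy => simp [hx, hy]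

theorem exists_killY_pderiv_eq_C (v : Fin n × Fin n × ℕ) {q : Rgen F n} (hq : q ∈ FY F n) :
    (∃ c, killY F n q = C c) ∧ ∃ c, killY F n (pderiv (Sum.inl v) q) = C c := by
  classical
  induction hq using Algebra.adjoin_induction with
  | mem x hx =>
    obtain ⟨w, rfl⟩ := hx
    refine ⟨⟨0, by simp [killY]⟩, if w = v then 1 else 0, ?_⟩
    by_cases h : w = v
    · simp [h]
    · simp [pderiv_X, h]
  | algebraMap r => exact ⟨⟨r, by simp [algebraMap_eq]⟩, 0, by simp⟩
  | add x y _ _ hx hy =>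
    obtain ⟨⟨a, ha⟩, a', ha'⟩ := hx
    obtain ⟨⟨b, hb⟩, b', hb'⟩ := hy
    exact ⟨⟨a + b, by simp [ha, hb]⟩, a' + b', by simp [ha', hb']⟩
  | mul x y _ _ hx hy =>
    obtain ⟨⟨a, ha⟩, a', ha'⟩ := hx
    obtain ⟨⟨b, hb⟩, b', hb'⟩ := hy
    exact ⟨⟨a * b, by simp [ha, hb]⟩, a * b' + b * a', by simp [ha, hb, ha', hb']⟩

/-- On `F[X]`, the part of `D` that is linear in `Y i i` is the `i`-th row Euler operator. -/
theorem killY_pderiv_eq_rowEuler {d : F → F} {D : Rgen F n → Rgen F n}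
    (hD_add : ∀ a b, D (a + b) = D a + D b)
    (hD_mul : ∀ a b, D (a * b) = D a * b + a * D b)
    (hD_C : ∀ f : F, D (C f) = C (d f))
    (hD_X : ∀ i j : Fin n,
      D (X (Sum.inr (i, j))) = ∑ l : Fin n, X (Sum.inl (i, l, 0)) * X (Sum.inr (l, j)))
    (i : Fin n) {p : Rgen F n} (hp : p ∈ FX F n) :
    killY F n (pderiv (Sum.inl (i, i, 0)) (D p)) = rowEuler F n i p := by
  classical
  induction hp using Algebra.adjoin_induction with
  | mem x hx =>
    obtain ⟨⟨a, b⟩, rfl⟩ := hx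
    by_cases h : a = i
    · subst h
      simp [hD_X, rowEuler_apply, pderiv_X, killY, Pi.single_apply, apply_ite]
    · simp [hD_X, rowEuler_apply, pderiv_X, h]
  | algebraMap r => simp [algebraMap_eq, hD_C]
  | add x y _ _ hx hy => simp [hD_add, hx, hy]
  | mul x y hx' hy' hx hy =>
    simp only [hD_mul, map_add, Derivation.leibniz, smul_eq_mul, map_mul, hx, hy,
      pderiv_inl_of_mem_FX _ hx', pderiv_inl_of_mem_FX _ hy', killY_of_mem_FX hx',
      killY_of_mem_FX hy', map_zero, mul_zero]
    ring

theorem apply_inl_of_mem_FX {p : Rgen F n} (hp : p ∈ FX F n) {β} (hβ : β ∈ p.support)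
    (v : Fin n × Fin n × ℕ) [CharZero F] : β (Sum.inl v) = 0 := by
  have h := coeff_X_mul_pderiv (Sum.inl v) p β
  rw [pderiv_inl_of_mem_FX v hp, mul_zero, coeff_zero] at h
  simpa [mem_support_iff.mp hβ] using h.symm

end

/-- If `p ∈ F[X]` is nonzero, `q ∈ F{Y}` and `D p = q * p`, then all
monomials of `p` have the same row sums `∑_j β_{ij}` for each `i`; in particular `p`
is homogeneous. -/
theorem stmt_9
    {F : Type*} [Field F] [CharZero F] (d : F → F)
    (hd_add : ∀ a b : F, d (a + b) = d a + d b)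
    (hd_mul : ∀ a b : F, d (a * b) = d a * b + a * d b)
    (n : ℕ) (hn : 1 ≤ n)
    (D : Rgen F n → Rgen F n)
    (hD_add : ∀ a b, D (a + b) = D a + D b)
    (hD_mul : ∀ a b, D (a * b) = D a * b + a * D b)
    (hD_C : ∀ f : F, D (C f) = C (d f))
    (hD_Y : ∀ (i j : Fin n) (k : ℕ),
      D (X (Sum.inl (i, j, k))) = X (Sum.inl (i, j, k + 1)))
    (hD_X : ∀ i j : Fin n,
      D (X (Sum.inr (i, j))) = ∑ l : Fin n, X (Sum.inl (i, l, 0)) * X (Sum.inr (l, j)))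
    (p q : Rgen F n) (hp : p ∈ FX F n) (hp0 : p ≠ 0) (hq : q ∈ FY F n)
    (hDp : D p = q * p) :
    (∀ β ∈ p.support, ∀ γ ∈ p.support, ∀ i : Fin n,
      ∑ j : Fin n, β (Sum.inr (i, j)) = ∑ j : Fin n, γ (Sum.inr (i, j))) ∧
    ∃ N : ℕ, p.IsHomogeneous N := by
  have hrow : ∀ β ∈ p.support, ∀ γ ∈ p.support, ∀ i : Fin n,
      ∑ j : Fin n, β (Sum.inr (i, j)) = ∑ j : Fin n, γ (Sum.inr (i, j)) := by
    intro β hβ γ hγ i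
    obtain ⟨-, c, hc⟩ := exists_killY_pderiv_eq_C (i, i, 0) hq
    have hE : rowEuler F n i p = C c * p := by
      rw [← killY_pderiv_eq_rowEuler hD_add hD_mul hD_C hD_X i hp, hDp]
      simp [pderiv_inl_of_mem_FX _ hp, hc, killY_of_mem_FX hp, mul_comm]
    have key : ∀ δ ∈ p.support, ((∑ j : Fin n, δ (Sum.inr (i, j)) : ℕ) : F) = c := by
      intro δ hδ
      have h := coeff_rowEuler i p δ
      rw [hE, coeff_C_mul] at h
      exact (mul_right_cancel₀ (mem_support_iff.mp hδ) h).symm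
    exact_mod_cast (key β hβ).trans (key γ hγ).symm
  refine ⟨hrow, ?_⟩
  have hdeg : ∀ β ∈ p.support, β.degree = ∑ i : Fin n, ∑ j : Fin n, β (Sum.inr (i, j)) := by
    intro β hβ
    rw [← Fintype.sum_prod_type', Finsupp.degree_apply]
    refine Eq.trans ?_ (Finset.sum_map Finset.univ Function.Embedding.inr fun v => β v)
    refine Finset.sum_subset (fun v hv => ?_) fun v _ hv => Finsupp.notMem_support_iff.mp hv
    rcases v with v | v
    · exact absurd (apply_inl_of_mem_FX hp hβ v) (Finsupp.mem_support_iff.mp hv)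
    · simp
  obtain ⟨γ, hγ⟩ := support_nonempty.mpr hp0
  refine ⟨γ.degree, fun β hβ => ?_⟩
  have hβ' := mem_support_iff.mpr hβ
  change Finsupp.weight (fun _ => 1) β = γ.degree
  rw [← Finsupp.degree_eq_weight_one, hdeg β hβ', hdeg γ hγ]
  exact Finset.sum_congr rfl fun i _ => hrow β hβ' γ hγ i
end

section
/- Let p ∈ F[X] be nonzero and q ∈ F{Y} with D(p) = q·p, let α = lp(p) and ℓ = lc(p). Then q = C(d(ℓ)/ℓ) + Σ_{i=1}^n (Σ_{j=1}^n α_{ij})·Y_{ii} (the row sums Σ_j α_{ij} ∈ ℕ acting as natural-number scalars). -/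
open MvPolynomial

/-- Strict degree reverse lexicographic comparison `α < β` of exponent vectors in the
`X`-variables, for the variable ordering `X 1 1 > X 1 2 > ⋯ > X 1 n > X 2 1 > ⋯ > X n n`:
either the total degree of `α` is smaller, or the total degrees agree and at the last
(rightmost, i.e. smallest) variable where they differ, `α` has the larger exponent. -/
def degRevLexLT {n : ℕ} (α β : (Fin n × Fin n) →₀ ℕ) : Prop :=
  (∑ v : Fin n × Fin n, α v) < (∑ v : Fin n × Fin n, β v) ∨
  ((∑ v : Fin n × Fin n, α v) = (∑ v : Fin n × Fin n, β v) ∧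
    ∃ v : Fin n × Fin n, β v < α v ∧
      ∀ w : Fin n × Fin n, (v.1 < w.1 ∨ (v.1 = w.1 ∧ v.2 < w.2)) → α w = β w)

/-- The operator `p ↦ ∑ j, X l j * ∂p/∂X i j`, replacing one variable of row `i` by the
corresponding variable of row `l`. -/
noncomputable def rowOp {F : Type*} [Field F] {n : ℕ} (i l : Fin n)
    (p : MvPolynomial (Fin n × Fin n) F) : MvPolynomial (Fin n × Fin n) F :=
  ∑ j : Fin n, X (l, j) * pderiv (i, j) p

theorem coeff_X_mul_pderiv_self {σ F : Type*} [Field F] (v : σ) (p : MvPolynomial σ F)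
    (β : σ →₀ ℕ) : coeff β (X v * pderiv v p) = (β v : F) * coeff β p := by
  classical
  rw [coeff_X_mul']
  split_ifs with h
  · have h1 : 1 ≤ β v := Nat.one_le_iff_ne_zero.mpr (Finsupp.mem_support_iff.mp h)
    rw [coeff_pderiv, tsub_add_cancel_of_le (Finsupp.single_le_iff.mpr h1)]
    simp [Nat.cast_sub h1, mul_comm]
  · simp [Finsupp.notMem_support_iff.mp h]

theorem coeff_rowOp_self {F : Type*} [Field F] {n : ℕ} (i : Fin n)
    (p : MvPolynomial (Fin n × Fin n) F) (β : (Fin n × Fin n) →₀ ℕ) :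
    coeff β (rowOp i i p) = ((∑ j : Fin n, β (i, j) : ℕ) : F) * coeff β p := by
  simp only [rowOp, coeff_sum, coeff_X_mul_pderiv_self]
  push_cast
  rw [Finset.sum_mul]

/-- For `i ≠ l` the operator `rowOp i l` lowers the degree in row `i`, so zero is its only
eigenvalue. -/
theorem eq_zero_of_rowOp_eq_C_mul {F : Type*} [Field F] {n : ℕ} {i l : Fin n} (hil : i ≠ l)
    {p : MvPolynomial (Fin n × Fin n) F} (hp : p ≠ 0) {c : F}
    (h : ∀ β, coeff β (rowOp i l p) = c * coeff β p) : c = 0 := by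
  classical
  obtain ⟨β, hβ, hmax⟩ := p.support.exists_max_image (fun β => ∑ j : Fin n, β (i, j))
    (Finset.nonempty_iff_ne_empty.mpr (by simpa using hp))
  have hzero : coeff β (rowOp i l p) = 0 := by
    rw [rowOp, coeff_sum]
    refine Finset.sum_eq_zero fun j _ => ?_
    rw [coeff_X_mul']
    split_ifs with hlj
    · rw [coeff_pderiv]
      suffices hγ : coeff (β - Finsupp.single (l, j) 1 + Finsupp.single (i, j) 1) p = 0 by
        rw [hγ, zero_mul]
      by_contra hγ
      have hle := hmax _ (mem_support_iff.mpr hγ)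
      have hrow : ∀ k : Fin n, (β - Finsupp.single (l, j) 1 + Finsupp.single (i, j) 1 :
          (Fin n × Fin n) →₀ ℕ) (i, k) = β (i, k) + if k = j then 1 else 0 := by
        intro k
        simp [Finsupp.single_apply, hil.symm, eq_comm (a := j)]
      simp only [hrow, Finset.sum_add_distrib] at hle
      simp at hle
    · rfl
  rw [h β] at hzero
  exact (mul_eq_zero.mp hzero).resolve_right (mem_support_iff.mp hβ)

/-- Reading an element of `R` as a polynomial in the `X i j` with coefficients in `F{Y}`. -/
noncomputable def collectX (F : Type*) [Field F] (n : ℕ) :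
    Rgen F n →+* MvPolynomial (Fin n × Fin n) (MvPolynomial (Fin n × Fin n × ℕ) F) :=
  eval₂Hom (C.comp C) (Sum.elim (fun v => C (X v)) X)

theorem collectX_C {F : Type*} [Field F] {n : ℕ} (a : F) : collectX F n (C a) = C (C a) := by
  simp [collectX]

theorem collectX_X_inl {F : Type*} [Field F] {n : ℕ} (v : Fin n × Fin n × ℕ) :
    collectX F n (X (Sum.inl v)) = C (X v) := by
  simp [collectX]

theorem collectX_X_inr {F : Type*} [Field F] {n : ℕ} (v : Fin n × Fin n) :
    collectX F n (X (Sum.inr v)) = X v := by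
  simp [collectX]

theorem collectX_rename_inr {F : Type*} [Field F] {n : ℕ} (p : MvPolynomial (Fin n × Fin n) F) :
    collectX F n (rename Sum.inr p) = map C p := by
  induction p using MvPolynomial.induction_on with
  | C a => simp [collectX_C]
  | add p q hp hq => simp [hp, hq]
  | mul_X p v hp => simp [hp, collectX_X_inr]

theorem collectX_rename_inl {F : Type*} [Field F] {n : ℕ}
    (q : MvPolynomial (Fin n × Fin n × ℕ) F) :
    collectX F n (rename Sum.inl q) = C q := by
  induction q using MvPolynomial.induction_on with
  | C a => simp [collectX_C]
  | add p q hp hq => simp [hp, hq]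
  | mul_X p v hp => simp [hp, collectX_X_inl]

theorem exists_rename_inl_of_mem_FY {F : Type*} [Field F] {n : ℕ} {q : Rgen F n}
    (hq : q ∈ FY F n) : ∃ q₀ : MvPolynomial (Fin n × Fin n × ℕ) F, rename Sum.inl q₀ = q := by
  rw [FY, Algebra.adjoin_range_eq_range_aeval] at hq
  obtain ⟨q₀, rfl⟩ := hq
  exact ⟨q₀, DFunLike.congr_fun (rename_eq_aeval Sum.inl) q₀⟩

theorem rowOp_C {F : Type*} [Field F] {n : ℕ} (i l : Fin n) (a : F) :
    rowOp i l (C a) = 0 := by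
  simp [rowOp]

theorem rowOp_add {F : Type*} [Field F] {n : ℕ} (i l : Fin n)
    (p q : MvPolynomial (Fin n × Fin n) F) :
    rowOp i l (p + q) = rowOp i l p + rowOp i l q := by
  simp [rowOp, mul_add, Finset.sum_add_distrib]

theorem rowOp_mul_X {F : Type*} [Field F] {n : ℕ} (i l a b : Fin n)
    (p : MvPolynomial (Fin n × Fin n) F) :
    rowOp i l (p * X (a, b)) = rowOp i l p * X (a, b) + if i = a then p * X (l, b) else 0 := by
  classical
  have hterm : ∀ j : Fin n, X (l, j) * pderiv (i, j) (p * X (a, b)) =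
      X (l, j) * pderiv (i, j) p * X (a, b) +
        if j = b then (if i = a then p * X (l, b) else 0) else 0 := by
    intro j
    rw [pderiv_mul, pderiv_X]
    by_cases hj : j = b
    · subst hj
      by_cases hi : i = a
      · subst hi
        simp
        ring
      · simp [hi, eq_comm (a := a)]
        ring
    · simp [hj, eq_comm (a := b)]
      ring
  simp only [rowOp, hterm, Finset.sum_add_distrib, Finset.sum_mul]
  simp

/-- The coefficients in the `X i j` of the derivative of a polynomial in `F[X]`. -/
theorem coeff_collectX_derivative {F : Type*} [Field F] {d : F → F}
    (hd_add : ∀ a b : F, d (a + b) = d a + d b) {n : ℕ} {D : Rgen F n → Rgen F n}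
    (hD_add : ∀ a b, D (a + b) = D a + D b)
    (hD_mul : ∀ a b, D (a * b) = D a * b + a * D b)
    (hD_C : ∀ f : F, D (C f) = C (d f))
    (hD_X : ∀ i j : Fin n,
      D (X (Sum.inr (i, j))) = ∑ l : Fin n, X (Sum.inl (i, l, 0)) * X (Sum.inr (l, j)))
    (p : MvPolynomial (Fin n × Fin n) F) (β : (Fin n × Fin n) →₀ ℕ) :
    coeff β (collectX F n (D (rename Sum.inr p))) =
      C (d (coeff β p)) + ∑ i : Fin n, ∑ l : Fin n, C (coeff β (rowOp i l p)) * X (i, l, 0) := by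
  classical
  have hd_zero : d 0 = 0 := by simpa using hd_add 0 0
  induction p using MvPolynomial.induction_on generalizing β with
  | C a =>
    simp only [rename_C, hD_C, rowOp_C, coeff_zero, map_zero, zero_mul, Finset.sum_const_zero,
      add_zero]
    by_cases hβ : 0 = β <;> simp [collectX_C, coeff_C, hβ, hd_zero]
  | add p q hp hq =>
    simp only [map_add, hD_add, coeff_add, hp, hq, hd_add, rowOp_add, add_mul,
      Finset.sum_add_distrib]
    ring
  | mul_X p v hp =>
    obtain ⟨a, b⟩ := v
    have hcollect : collectX F n (D (rename Sum.inr (p * X (a, b)))) =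
        collectX F n (D (rename Sum.inr p)) * X (a, b) +
          ∑ l : Fin n, C (X (a, l, 0)) * map C (p * X (l, b)) := by
      rw [map_mul (rename Sum.inr), hD_mul, rename_X, hD_X, map_add, map_mul, map_mul, map_sum,
        collectX_rename_inr, collectX_X_inr, Finset.mul_sum]
      refine congrArg₂ _ rfl (Finset.sum_congr rfl fun l _ => ?_)
      rw [map_mul, map_mul, collectX_X_inl, collectX_X_inr, map_X, mul_left_comm]
    have hrow : ∑ i : Fin n, ∑ l : Fin n,
        C (coeff β (rowOp i l (p * X (a, b)))) * X (i, l, 0) =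
        ∑ i : Fin n, ∑ l : Fin n,
          C (coeff β (rowOp i l p * X (a, b))) * (X (i, l, 0) :
            MvPolynomial (Fin n × Fin n × ℕ) F) +
        ∑ l : Fin n, X (a, l, 0) * C (coeff β (p * X (l, b))) := by
      have hite : ∀ i l : Fin n, C (coeff β (if i = a then p * X (l, b) else 0)) * X (i, l, 0) =
          if i = a then X (a, l, 0) * C (coeff β (p * X (l, b))) else
            (0 : MvPolynomial (Fin n × Fin n × ℕ) F) := by
        intro i l
        split_ifs with h
        · rw [h, mul_comm]
        · simp
      simp only [rowOp_mul_X, coeff_add, map_add, add_mul, Finset.sum_add_distrib, hite]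
      congr 1
      rw [Finset.sum_comm]
      simp
    have hmain : coeff β (collectX F n (D (rename Sum.inr p)) * X (a, b)) =
        C (d (coeff β (p * X (a, b)))) + ∑ i : Fin n, ∑ l : Fin n,
          C (coeff β (rowOp i l p * X (a, b))) * X (i, l, 0) := by
      simp only [coeff_mul_X' β (a, b)]
      split_ifs with h
      · exact hp _
      · simp [hd_zero]
    rw [hcollect, hrow, coeff_add, coeff_sum, ← add_assoc, hmain]
    refine congrArg₂ _ rfl (Finset.sum_congr rfl fun l _ => ?_)
    rw [coeff_C_mul, coeff_map]

/-- If `p ∈ F[X]` is a nonzero Darboux polynomial with cofactor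
`q ∈ F{Y}`, `α = lp(p)` its leading exponent vector (degrevlex) and `ℓ = lc(p)` its
leading coefficient, then `q = C (d ℓ / ℓ) + ∑ i, (∑ j, α i j) • Y i i`. -/
theorem stmt_10
    {F : Type*} [Field F] [CharZero F] (d : F → F)
    (hd_add : ∀ a b : F, d (a + b) = d a + d b)
    (hd_mul : ∀ a b : F, d (a * b) = d a * b + a * d b)
    (n : ℕ) (hn : 1 ≤ n)
    (D : Rgen F n → Rgen F n)
    (hD_add : ∀ a b, D (a + b) = D a + D b)
    (hD_mul : ∀ a b, D (a * b) = D a * b + a * D b)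
    (hD_C : ∀ f : F, D (C f) = C (d f))
    (hD_Y : ∀ (i j : Fin n) (k : ℕ),
      D (X (Sum.inl (i, j, k))) = X (Sum.inl (i, j, k + 1)))
    (hD_X : ∀ i j : Fin n,
      D (X (Sum.inr (i, j))) = ∑ l : Fin n, X (Sum.inl (i, l, 0)) * X (Sum.inr (l, j)))
    (p0 : MvPolynomial (Fin n × Fin n) F) (hp0 : p0 ≠ 0)
    (q : Rgen F n) (hq : q ∈ FY F n)
    (hDp : D (rename Sum.inr p0) = q * rename Sum.inr p0)
    (α : (Fin n × Fin n) →₀ ℕ) (hmem : α ∈ p0.support)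
    (hlead : ∀ β ∈ p0.support, β ≠ α → degRevLexLT β α)
    :
    q = C (d (coeff α p0) / coeff α p0)
      + ∑ i : Fin n, (∑ j : Fin n, α (i, j)) • X (Sum.inl (i, i, (0 : ℕ))) := by
  classical
  obtain ⟨q₀, rfl⟩ := exists_rename_inl_of_mem_FY hq
  have hcoeff : ∀ β, q₀ * C (coeff β p0) = C (d (coeff β p0)) +
      ∑ i : Fin n, ∑ l : Fin n, C (coeff β (rowOp i l p0)) * X (i, l, 0) := by
    intro β
    rw [← coeff_collectX_derivative hd_add hD_add hD_mul hD_C hD_X, hDp, map_mul,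
      collectX_rename_inl, collectX_rename_inr, coeff_C_mul, coeff_map]
  have heigen : ∀ (i l : Fin n) (β), coeff β (rowOp i l p0) =
      coeff (Finsupp.single (i, l, 0) 1) q₀ * coeff β p0 := by
    intro i l β
    have h := congrArg (coeff (Finsupp.single (i, l, 0) 1)) (hcoeff β)
    rw [mul_comm q₀, coeff_C_mul, mul_comm, coeff_add, coeff_C,
      if_neg (Finsupp.single_ne_zero.mpr one_ne_zero).symm, zero_add] at h
    rw [h]
    have hX : ∀ i' l' : Fin n, coeff (Finsupp.single (i, l, 0) 1)
        (X (i', l', 0) : MvPolynomial (Fin n × Fin n × ℕ) F) =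
        if l' = l then (if i' = i then 1 else 0) else 0 := by
      intro i' l'
      rw [coeff_X]
      simp only [Finsupp.single_left_inj one_ne_zero, Prod.mk.injEq, and_true]
      split_ifs <;> simp_all
    simp [coeff_sum, hX]
  have hα : coeff α p0 ≠ 0 := mem_support_iff.mp hmem
  have hoff : ∀ i l : Fin n, i ≠ l → coeff (Finsupp.single (i, l, 0) 1) q₀ = 0 :=
    fun i l hil => eq_zero_of_rowOp_eq_C_mul hil hp0 (heigen i l)
  have hdiag : ∀ i l : Fin n, coeff α (rowOp i l p0) =
      if l = i then ((∑ j : Fin n, α (i, j) : ℕ) : F) * coeff α p0 else 0 := by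
    intro i l
    split_ifs with h
    · rw [h, coeff_rowOp_self]
    · rw [heigen, hoff i l (Ne.symm h), zero_mul]
  have hq₀ : q₀ = C (d (coeff α p0) / coeff α p0) +
      ∑ i : Fin n, (∑ j : Fin n, α (i, j)) • X (i, i, 0) := by
    refine mul_right_cancel₀ (b := C (coeff α p0)) (by simpa using hα) ?_
    rw [hcoeff α, add_mul, ← C_mul, div_mul_cancel₀ _ hα, Finset.sum_mul]
    congr 1
    refine Finset.sum_congr rfl fun i _ => ?_
    rw [Finset.sum_eq_single i (fun l _ hl => by rw [hdiag, if_neg hl, map_zero, zero_mul])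
      (by simp), hdiag, if_pos rfl, nsmul_eq_mul, C_mul, map_natCast]
    ring
  rw [hq₀]
  simp only [map_add, map_sum, map_nsmul, rename_C, rename_X]
end

section
/- Let p ∈ F[X] be nonzero and q ∈ F{Y} with D(p) = q·p, and let α = lp(p). Then there exists a ∈ ℕ such that α_{i,n+1−i} = a for every 1 ≤ i ≤ n and α_{ij} = 0 whenever j ≠ n+1−i. Equivalently, lp(p) = a·(Σ_{i=1}^n e_{i,n+1−i}), the exponent vector of (X_{1n}·X_{2,n−1}·⋯·X_{n1})^a, which is the leading exponent vector of det[X]^a; in particular p is not reduced with respect to det[X] unless p is constant. -/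
open MvPolynomial

/-- The derivation `∑ j, X l j * ∂/∂X i j` of `F[X]`: the infinitesimal action of the row
operation which adds a multiple of row `l` to row `i`. -/
noncomputable def rowDeriv (F : Type*) [Field F] {n : ℕ} (i l : Fin n) :
    Derivation F (MvPolynomial (Fin n × Fin n) F) (MvPolynomial (Fin n × Fin n) F) :=
  mkDerivation F fun v => if v.1 = i then X (l, v.2) else 0

lemma rowDeriv_X {F : Type*} [Field F] {n : ℕ} (i l : Fin n) (v : Fin n × Fin n) :
    rowDeriv F i l (X v) = if v.1 = i then X (l, v.2) else 0 :=
  mkDerivation_X _ _ _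

lemma lie_rowDeriv {F : Type*} [Field F] {n : ℕ} {i l : Fin n} (hil : i ≠ l) :
    ⁅rowDeriv F i l, rowDeriv F l i⁆ = rowDeriv F l l - rowDeriv F i i := by
  refine MvPolynomial.derivation_ext fun v => ?_
  obtain ⟨r, j⟩ := v
  rw [Derivation.commutator_apply, Derivation.sub_apply]
  simp only [rowDeriv_X]
  by_cases h1 : r = i
  · subst h1
    simp [hil, rowDeriv_X]
  · by_cases h2 : r = l
    · subst h2
      simp [h1, rowDeriv_X]
    · simp [h1, h2]

lemma rowDeriv_self_monomial {F : Type*} [Field F] {n : ℕ} (i : Fin n)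
    (β : (Fin n × Fin n) →₀ ℕ) (b : F) :
    rowDeriv F i i (monomial β b) = (∑ j, β (i, j)) • monomial β b := by
  rw [rowDeriv, mkDerivation_monomial, Finsupp.sum_fintype _ _ (by simp), Fintype.sum_prod_type,
    Finset.sum_eq_single i (fun r _ hr => by simp [hr]) (by simp), Finset.sum_smul,
    Finset.smul_sum]
  refine Finset.sum_congr rfl fun j _ => ?_
  rw [← X_mul_pderiv_monomial, pderiv_monomial, if_pos rfl, smul_eq_mul, mul_comm,
    ← mul_smul_comm, smul_monomial, smul_eq_mul]

/-- An eigenvector of `rowDeriv F i i` is homogeneous in the variables of row `i`. -/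
lemma row_sum_eq_of_rowDeriv_self {F : Type*} [Field F] {n : ℕ} {i : Fin n}
    {p : MvPolynomial (Fin n × Fin n) F} {c : F} (h : rowDeriv F i i p = C c * p)
    {β : (Fin n × Fin n) →₀ ℕ} (hβ : β ∈ p.support) : ((∑ j, β (i, j) : ℕ) : F) = c := by
  have key : ∀ p : MvPolynomial (Fin n × Fin n) F,
      coeff β (rowDeriv F i i p) = ((∑ j, β (i, j) : ℕ) : F) * coeff β p := by
    intro p
    induction p using MvPolynomial.induction_on' with
    | monomial γ b =>
      rw [rowDeriv_self_monomial, coeff_smul, coeff_monomial]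
      split_ifs with hγ
      · rw [hγ, nsmul_eq_mul]
      · simp
    | add p q hp hq => rw [map_add, coeff_add, hp, hq, coeff_add, mul_add]
  have h' := key p
  rw [h, coeff_C_mul] at h'
  exact (mul_right_cancel₀ (mem_support_iff.mp hβ) h').symm

/-- Eigenvectors of `rowDeriv F i l` are invariant under the corresponding transvections. -/
lemma eval_transvection_mul {F : Type*} [Field F] [CharZero F] {n : ℕ} {i l : Fin n}
    (hil : i ≠ l) {p : MvPolynomial (Fin n × Fin n) F} {c : F}
    (h : rowDeriv F i l p = C c * p) (t : F) (N : Matrix (Fin n) (Fin n) F) :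
    eval (fun v => (Matrix.transvection i l t * N) v.1 v.2) p = eval (fun v => N v.1 v.2) p := by
  let g : Fin n × Fin n → Polynomial F := fun v =>
    Polynomial.C (N v.1 v.2) + if v.1 = i then Polynomial.X * Polynomial.C (N l v.2) else 0
  have chain : ∀ p : MvPolynomial (Fin n × Fin n) F,
      Polynomial.derivative (aeval g p) = aeval g (rowDeriv F i l p) := by
    intro p
    induction p using MvPolynomial.induction_on with
    | C a =>
      rw [← algebraMap_eq, Derivation.map_algebraMap, AlgHom.commutes,
        ← Polynomial.C_eq_algebraMap, Polynomial.derivative_C, map_zero]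
    | add p q hp hq => simp only [map_add, hp, hq]
    | mul_X p v hp =>
      have hv : Polynomial.derivative (g v) = aeval g (rowDeriv F i l (X v)) := by
        rw [rowDeriv_X]
        by_cases hvi : v.1 = i <;> simp [g, hvi, hil.symm]
      rw [Derivation.leibniz, map_mul, Polynomial.derivative_mul, hp, aeval_X, hv]
      simp only [smul_eq_mul, map_add, map_mul, aeval_X]
      ring
  have hconst : ∃ b, aeval g p = Polynomial.C b := by
    have hder : Polynomial.derivative (aeval g p) = Polynomial.C c * aeval g p := by
      rw [chain, h, map_mul, ← algebraMap_eq, AlgHom.commutes, Polynomial.C_eq_algebraMap]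
    rcases eq_or_ne c 0 with rfl | hc
    · rw [map_zero, zero_mul] at hder
      exact ⟨_, Polynomial.eq_C_of_derivative_eq_zero hder⟩
    · refine ⟨0, ?_⟩
      by_contra hf
      rw [map_zero] at hf
      have := Polynomial.degree_derivative_lt hf
      rw [hder, Polynomial.degree_C_mul hc] at this
      exact lt_irrefl _ this
  have heval : ∀ s : F, eval (fun v => (Matrix.transvection i l s * N) v.1 v.2) p =
      Polynomial.eval s (aeval g p) := by
    intro s
    have : (Polynomial.aeval s).comp (aeval g) =
        aeval (fun v : Fin n × Fin n => (Matrix.transvection i l s * N) v.1 v.2) := by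
      refine MvPolynomial.algHom_ext fun v => ?_
      by_cases hvi : v.1 = i
      · simp [g, hvi, Matrix.transvection_mul_apply_same, mul_comm s]
      · simp [g, hvi, Matrix.transvection_mul_apply_of_ne]
    rw [← Polynomial.coe_aeval_eq_eval, ← coe_aeval_eq_eval, RingHom.coe_coe, ← this]
    rfl
  obtain ⟨b, hb⟩ := hconst
  have h0 := heval 0
  rw [Matrix.transvection_zero, one_mul, hb, Polynomial.eval_C] at h0
  rw [heval, h0, hb, Polynomial.eval_C]

lemma eval_diagonal_mul {F : Type*} [Field F] {n : ℕ}
    {p : MvPolynomial (Fin n × Fin n) F} {a : ℕ}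
    (h : ∀ β ∈ p.support, ∀ i, ∑ j, β (i, j) = a) (e : Fin n → F)
    (N : Matrix (Fin n) (Fin n) F) :
    eval (fun v => (Matrix.diagonal e * N) v.1 v.2) p =
      (∏ i, e i) ^ a * eval (fun v => N v.1 v.2) p := by
  rw [eval_eq', eval_eq', Finset.mul_sum]
  refine Finset.sum_congr rfl fun β hβ => ?_
  simp only [Matrix.diagonal_mul, mul_pow, Finset.prod_mul_distrib]
  have : ∏ v : Fin n × Fin n, e v.1 ^ β v = (∏ i, e i) ^ a := by
    rw [Fintype.prod_prod_type, ← Finset.prod_pow]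
    exact Finset.prod_congr rfl fun i _ => by simp only [Finset.prod_pow_eq_pow_sum, h β hβ i]
  rw [this]
  ring

/-- A function on matrices which scales by `(∏ i, e i) ^ a` under diagonal matrices and is invariant
under transvections scales by `det ^ a` under invertible matrices. -/
lemma apply_mul_eq_det_pow_mul {F : Type*} [Field F] {n a : ℕ}
    {f : Matrix (Fin n) (Fin n) F → F}
    (hdiag : ∀ e N, f (Matrix.diagonal e * N) = (∏ i, e i) ^ a * f N)
    (htrans : ∀ i l, i ≠ l → ∀ t N, f (Matrix.transvection i l t * N) = f N)
    {M : Matrix (Fin n) (Fin n) F} (hM : M.det ≠ 0) (N : Matrix (Fin n) (Fin n) F) :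
    f (M * N) = M.det ^ a * f N := by
  refine Matrix.diagonal_transvection_induction_of_det_ne_zero
    (fun M => ∀ N, f (M * N) = M.det ^ a * f N) M hM ?_ ?_ ?_ N
  · intro e _ N
    rw [Matrix.det_diagonal, hdiag]
  · intro t N
    rw [Matrix.TransvectionStruct.det, one_pow, one_mul]
    exact htrans _ _ t.hij t.c N
  · intro A B _ _ hA hB N
    rw [mul_assoc, hA, hB, Matrix.det_mul, mul_pow, mul_assoc]

/-- A polynomial on matrices which is an eigenvector of all infinitesimal row operations and
homogeneous of degree `a` in each row is a multiple of `det ^ a` on invertible matrices. -/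
lemma eval_eq_det_pow_mul {F : Type*} [Field F] [CharZero F] {n : ℕ}
    {p : MvPolynomial (Fin n × Fin n) F} {c : Fin n → Fin n → F}
    (hc : ∀ i l, rowDeriv F i l p = C (c i l) * p) {a : ℕ}
    (h : ∀ β ∈ p.support, ∀ i, ∑ j, β (i, j) = a) (M : Matrix (Fin n) (Fin n) F)
    (hM : M.det ≠ 0) :
    eval (fun v => M v.1 v.2) p =
      M.det ^ a * eval (fun v => (1 : Matrix (Fin n) (Fin n) F) v.1 v.2) p := by
  have H := apply_mul_eq_det_pow_mul (f := fun M => eval (fun v => M v.1 v.2) p)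
    (fun e N => by simpa only using eval_diagonal_mul h e N)
    (fun i l hil t N => by simpa only using eval_transvection_mul hil (hc i l) t N) hM 1
  rwa [mul_one] at H

lemma eq_of_eval_eq_of_det_ne_zero {F : Type*} [Field F] [CharZero F] {n : ℕ}
    {p r : MvPolynomial (Fin n × Fin n) F}
    (h : ∀ M : Matrix (Fin n) (Fin n) F, M.det ≠ 0 →
      eval (fun v => M v.1 v.2) p = eval (fun v => M v.1 v.2) r) : p = r := by
  refine mul_right_cancel₀ (Matrix.det_mvPolynomialX_ne_zero (Fin n) F) (MvPolynomial.funext ?_)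
  intro x
  have hdet : eval x (Matrix.mvPolynomialX (Fin n) (Fin n) F).det =
      (Matrix.of fun i j => x (i, j)).det := by
    rw [RingHom.map_det]
    congr 1
    ext i j
    simp
  rw [map_mul, map_mul, hdet]
  by_cases h0 : (Matrix.of fun i j => x (i, j)).det = 0
  · rw [h0, mul_zero, mul_zero]
  · have hx := h _ h0
    simp only [Matrix.of_apply, Prod.mk.eta] at hx
    rw [hx]

/-- A Darboux polynomial in `F[X]` with cofactor in `F{Y}` is an eigenvector of all infinitesimal
row operations. -/
lemma exists_rowDeriv_eq_mul {F : Type*} [Field F] {d : F → F} {n : ℕ}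
    {D : Rgen F n → Rgen F n}
    (hD_add : ∀ a b, D (a + b) = D a + D b)
    (hD_mul : ∀ a b, D (a * b) = D a * b + a * D b)
    (hD_C : ∀ f : F, D (C f) = C (d f))
    (hD_X : ∀ i j : Fin n,
      D (X (Sum.inr (i, j))) = ∑ l : Fin n, X (Sum.inl (i, l, 0)) * X (Sum.inr (l, j)))
    {p : MvPolynomial (Fin n × Fin n) F} {q : Rgen F n} (hq : q ∈ FY F n)
    (hDp : D (rename Sum.inr p) = q * rename Sum.inr p) (i l : Fin n) :
    ∃ c : F, rowDeriv F i l p = C c * p := by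
  have expand : ∀ p : MvPolynomial (Fin n × Fin n) F, ∃ r : MvPolynomial (Fin n × Fin n) F,
      D (rename Sum.inr p) = rename Sum.inr r +
        ∑ i, ∑ l, X (Sum.inl (i, l, 0)) * rename Sum.inr (rowDeriv F i l p) := by
    intro p
    induction p using MvPolynomial.induction_on with
    | C a =>
      refine ⟨C (d a), ?_⟩
      have h0 : ∀ i l, rowDeriv F i l (C a : MvPolynomial (Fin n × Fin n) F) = 0 :=
        fun i l => (rowDeriv F i l).map_algebraMap a
      simp [h0, hD_C]
    | add p q hp hq =>
      obtain ⟨r, hr⟩ := hp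
      obtain ⟨s, hs⟩ := hq
      refine ⟨r + s, ?_⟩
      simp only [map_add, hD_add, hr, hs, mul_add, Finset.sum_add_distrib]
      ring
    | mul_X p v hp =>
      obtain ⟨r, hr⟩ := hp
      refine ⟨r * X v, ?_⟩
      have hv : D (X (Sum.inr v)) =
          ∑ i, ∑ l, X (Sum.inl (i, l, 0)) * rename Sum.inr (rowDeriv F i l (X v)) := by
        obtain ⟨i, j⟩ := v
        rw [hD_X, Finset.sum_comm]
        refine Finset.sum_congr rfl fun l _ => ?_
        rw [Finset.sum_eq_single i (fun r _ hr => by simp [rowDeriv_X, hr.symm]) (by simp)]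
        simp [rowDeriv_X]
      have hsum : ∑ i, ∑ l, X (Sum.inl (i, l, 0)) * rename Sum.inr (rowDeriv F i l (p * X v)) =
          (∑ i, ∑ l, X (Sum.inl (i, l, 0)) * rename Sum.inr (rowDeriv F i l p)) *
            X (Sum.inr v) + rename Sum.inr p * D (X (Sum.inr v)) := by
        rw [hv]
        simp only [Finset.sum_mul, Finset.mul_sum, ← Finset.sum_add_distrib]
        refine Finset.sum_congr rfl fun i _ => Finset.sum_congr rfl fun l _ => ?_
        rw [Derivation.leibniz, map_add, smul_eq_mul, smul_eq_mul, map_mul, map_mul, rename_X]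
        ring
      rw [hsum, map_mul, map_mul, rename_X, hD_mul, hr]
      ring
  -- specialise the variables `Y` to constants
  let ψ : (Fin n × Fin n × ℕ → F) → Rgen F n →ₐ[F] MvPolynomial (Fin n × Fin n) F :=
    fun y => aeval (Sum.elim (fun v => C (y v)) X)
  have hψ : ∀ y (r : MvPolynomial (Fin n × Fin n) F), ψ y (rename Sum.inr r) = r := by
    intro y r
    simp only [ψ, aeval_rename, Sum.elim_comp_inr, aeval_X_left_apply]
  have hψq : ∀ y, ∃ b, ψ y q = C b := by
    intro y
    have hle : FY F n ≤ (⊥ : Subalgebra F (MvPolynomial (Fin n × Fin n) F)).comap (ψ y) := by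
      refine Algebra.adjoin_le ?_
      rintro _ ⟨v, rfl⟩
      exact Algebra.mem_bot.mpr ⟨y v, by simp [ψ, algebraMap_eq]⟩
    obtain ⟨b, hb⟩ := Algebra.mem_bot.mp (hle hq)
    exact ⟨b, hb.symm⟩
  obtain ⟨r, hr⟩ := expand p
  rw [hDp] at hr
  obtain ⟨b₀, hb₀⟩ := hψq 0
  obtain ⟨b₁, hb₁⟩ := hψq (Pi.single (i, l, 0) 1)
  have h₀ := congrArg (ψ 0) hr
  have h₁ := congrArg (ψ (Pi.single (i, l, 0) 1)) hr
  simp only [map_mul, map_add, map_sum, hψ, hb₀, hb₁] at h₀ h₁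
  have e₀ : ∀ v, ψ 0 (X (Sum.inl v)) = 0 := fun v => by simp [ψ]
  have e₁ : ∀ i' l', ψ (Pi.single (i, l, 0) 1) (X (Sum.inl (i', l', 0))) =
      if i' = i then if l' = l then 1 else 0 else 0 := fun i' l' => by
    by_cases h1 : i' = i <;> by_cases h2 : l' = l <;> simp [ψ, Pi.single_apply, h1, h2]
  simp only [e₀, e₁, zero_mul, Finset.sum_const_zero, add_zero, ite_mul, one_mul] at h₀ h₁
  rw [Finset.sum_eq_single i (fun x _ hx => by simp [hx]) (by simp)] at h₁
  simp only [if_true, Finset.sum_ite_eq', Finset.mem_univ] at h₁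
  refine ⟨b₁ - b₀, ?_⟩
  rw [map_sub, sub_mul, h₁, h₀, add_sub_cancel_left]

/-- Among exponents all of whose line sums equal `a`, the antidiagonal one is degrevlex-maximal. -/
lemma not_degRevLexLT_of_antidiagonal {n a : ℕ} {α δ : (Fin n × Fin n) →₀ ℕ}
    (hrow : ∀ i, ∑ j, α (i, j) = a) (hcol : ∀ j, ∑ i, α (i, j) = a)
    (hδ : ∀ i, δ (i, i.rev) = a) (hδ' : ∀ i j, j ≠ i.rev → δ (i, j) = 0) :
    ¬ degRevLexLT δ α := by
  have hδrow : ∀ i, ∑ j, δ (i, j) = a := fun i => by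
    rw [Finset.sum_eq_single i.rev (fun j _ hj => hδ' i j hj) (by simp), hδ]
  rintro (hlt | ⟨-, ⟨i, k⟩, hv, hw⟩)
  · simp [Fintype.sum_prod_type, hrow, hδrow] at hlt
  · obtain rfl : k = i.rev := by
      by_contra hk
      rw [hδ' i k hk] at hv
      exact absurd hv (by simp)
    rw [hδ] at hv
    have hex : ∃ j, j ≠ i.rev ∧ α (i, j) ≠ 0 := by
      by_contra! hcon
      have := hrow i
      rw [Finset.sum_eq_single i.rev (fun j _ hj => hcon j hj) (by simp)] at this
      omega
    obtain ⟨j, hj, hαj⟩ := hex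
    rcases lt_or_gt_of_ne hj with hlt | hgt
    · have hi : i < j.rev := by rwa [← Fin.rev_rev i, Fin.rev_lt_rev]
      have h1 : α (j.rev, j) = a := by
        rw [← hw (j.rev, j) (Or.inl hi)]
        simpa using hδ j.rev
      have h2 : α (i, j) + α (j.rev, j) ≤ ∑ r, α (r, j) := by
        rw [← Finset.sum_pair (f := fun r => α (r, j)) hi.ne]
        exact Finset.sum_le_sum_of_subset (Finset.subset_univ _)
      rw [hcol, h1] at h2
      omega
    · exact hαj (by rw [← hw (i, j) (Or.inr ⟨rfl, hgt⟩), hδ' i j hj])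

/-- The leading exponent vector (degrevlex) of a nonzero Darboux
polynomial `p ∈ F[X]` equals the exponent vector of `(X_{1n} X_{2,n-1} ⋯ X_{n1})^a`
for some `a ∈ ℕ`, i.e. the leading exponent vector of `det[X]^a`. -/
theorem stmt_12
    {F : Type*} [Field F] [CharZero F] (d : F → F)
    (hd_add : ∀ a b : F, d (a + b) = d a + d b)
    (hd_mul : ∀ a b : F, d (a * b) = d a * b + a * d b)
    (n : ℕ) (hn : 1 ≤ n)
    (D : Rgen F n → Rgen F n)
    (hD_add : ∀ a b, D (a + b) = D a + D b)
    (hD_mul : ∀ a b, D (a * b) = D a * b + a * D b)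
    (hD_C : ∀ f : F, D (C f) = C (d f))
    (hD_Y : ∀ (i j : Fin n) (k : ℕ),
      D (X (Sum.inl (i, j, k))) = X (Sum.inl (i, j, k + 1)))
    (hD_X : ∀ i j : Fin n,
      D (X (Sum.inr (i, j))) = ∑ l : Fin n, X (Sum.inl (i, l, 0)) * X (Sum.inr (l, j)))
    (p0 : MvPolynomial (Fin n × Fin n) F) (hp0 : p0 ≠ 0)
    (q : Rgen F n) (hq : q ∈ FY F n)
    (hDp : D (rename Sum.inr p0) = q * rename Sum.inr p0)
    (α : (Fin n × Fin n) →₀ ℕ) (hmem : α ∈ p0.support)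
    (hlead : ∀ β ∈ p0.support, β ≠ α → degRevLexLT β α)
    :
    ∃ a : ℕ, (∀ i : Fin n, α (i, i.rev) = a) ∧
      (∀ i j : Fin n, j ≠ i.rev → α (i, j) = 0) ∧
      α = a • ∑ i : Fin n, Finsupp.single (i, i.rev) 1 := by
  choose c hc using exists_rowDeriv_eq_mul hD_add hD_mul hD_C hD_X hq hDp
  have hc_eq : ∀ i l, c i i = c l l := by
    intro i l
    rcases eq_or_ne i l with rfl | hil
    · rfl
    have hlie := congrArg (fun E => E p0) (lie_rowDeriv (F := F) hil)
    simp only [Derivation.commutator_apply, Derivation.sub_apply, hc, ← smul_eq_C_mul,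
      Derivation.map_smul] at hlie
    rw [smul_comm, sub_self, ← sub_smul, eq_comm, smul_eq_zero, or_iff_left hp0] at hlie
    exact (sub_eq_zero.mp hlie).symm
  obtain ⟨a, hrow⟩ : ∃ a : ℕ, ∀ β ∈ p0.support, ∀ i, ∑ j, β (i, j) = a := by
    refine ⟨∑ j, α (⟨0, hn⟩, j), fun β hβ i => Nat.cast_injective (R := F) ?_⟩
    rw [row_sum_eq_of_rowDeriv_self (hc _ _) hβ, row_sum_eq_of_rowDeriv_self (hc _ _) hmem]
    exact hc_eq _ _
  have hdet := eval_eq_det_pow_mul hc hrow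
  have hone : eval (fun v => (1 : Matrix (Fin n) (Fin n) F) v.1 v.2) p0 ≠ 0 := by
    intro h0
    refine hp0 (eq_of_eval_eq_of_det_ne_zero fun M hM => ?_)
    rw [hdet M hM, h0, mul_zero, map_zero]
  have hcol : ∀ j, ∑ i, α (i, j) = a := by
    have hswap : rename Prod.swap p0 = p0 := by
      refine eq_of_eval_eq_of_det_ne_zero fun M hM => ?_
      have hM' := hdet M.transpose (by rwa [Matrix.det_transpose])
      rw [Matrix.det_transpose, ← hdet M hM] at hM'
      rw [eval_rename]
      exact hM'
    have hmem' : α.mapDomain Prod.swap ∈ p0.support := by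
      rw [mem_support_iff, ← hswap, coeff_rename_mapDomain _ Prod.swap_injective]
      exact mem_support_iff.mp hmem
    intro j
    rw [← hrow _ hmem' j]
    refine Finset.sum_congr rfl fun i _ => ?_
    exact (Finsupp.mapDomain_apply Prod.swap_injective α (i, j)).symm
  obtain ⟨δ, hδmem, hδ'⟩ : ∃ δ ∈ p0.support, ∀ i j, j ≠ i.rev → δ (i, j) = 0 := by
    let J : Matrix (Fin n) (Fin n) F := (Fin.revPerm).permMatrix F
    have hJ : J.det ≠ 0 := by
      rw [Matrix.det_permutation]
      exact_mod_cast (Equiv.Perm.sign _).ne_zero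
    have hne : eval (fun v => J v.1 v.2) p0 ≠ 0 := by
      rw [hdet J hJ]
      exact mul_ne_zero (pow_ne_zero _ hJ) hone
    rw [eval_eq'] at hne
    obtain ⟨δ, hδ, hterm⟩ := Finset.exists_ne_zero_of_sum_ne_zero hne
    refine ⟨δ, hδ, fun i j hj => ?_⟩
    have hfac := Finset.prod_ne_zero_iff.mp (right_ne_zero_of_mul hterm) (i, j)
      (Finset.mem_univ _)
    by_contra h0
    refine hfac ?_
    have : J i j = 0 := by simp [J, Equiv.Perm.permMatrix, PEquiv.toMatrix_apply, hj.symm]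
    simp [this, h0]
  have hδ : ∀ i, δ (i, i.rev) = a := fun i => by
    rw [← hrow δ hδmem i, Finset.sum_eq_single i.rev (fun j _ hj => hδ' i j hj) (by simp)]
  obtain rfl : δ = α := by
    by_contra hne
    exact not_degRevLexLT_of_antidiagonal (hrow α hmem) hcol hδ hδ' (hlead δ hδmem hne)
  refine ⟨a, hδ, hδ', ?_⟩
  ext ⟨i, j⟩
  simp only [Finsupp.smul_apply, Finsupp.finsetSum_apply, Finsupp.single_apply, Prod.mk.injEq,
    smul_eq_mul]
  by_cases hj : j = i.rev
  · subst hj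
    rw [hδ, Finset.sum_eq_single i (fun r _ hr => by simp [hr]) (by simp)]
    simp
  · rw [hδ' i j hj, Finset.sum_eq_zero, mul_zero]
    rintro r -
    rw [if_neg]
    rintro ⟨rfl, rfl⟩
    exact hj rfl
end
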